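/- The map ⇑ satisfies: (i) on 𝒯_0^0, ⇑ ∘ ↑_μ = ↑_μ ∘ ⇑; and (ii) for all σ, τ ∈ 𝒯_0^0, ⇑(σ ↷_0 τ) = Σ_{a∈ℕ^{d+1}} (⇑σ) ↷_a (⇑τ), identities in the space of (possibly infinite) formal linear combinations of decorated trees. -/

import Mathlib

noncomputable section
open scoped BigOperators
attribute [local instance] Classical.propDecidable

namespace Flow

/-- Multi-indices in `ℕ^{d+1}`. -/
abbrev Multi (d : ℕ) := Fin (d + 1) → ℕ

/-- `k! = ∏ᵢ (kᵢ)!`. -/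
def mfact {d : ℕ} (k : Multi d) : ℕ := ∏ i, (k i).factorial

/-- multinomial binomial coefficient `binom(k,j) = ∏ᵢ binom(kᵢ,jᵢ)`. -/
def mbinom {d : ℕ} (k j : Multi d) : ℕ := ∏ i, (k i).choose (j i)

/-- `|k|_𝔰` for the parabolic scaling `𝔰 = (λ,1,…,1)`. -/
def sNorm {d : ℕ} (lam : ℝ) (k : Multi d) : ℝ :=
  lam * (k 0 : ℝ) + ∑ i, (if i = (0 : Fin (d + 1)) then 0 else (k i : ℝ))

/-- Planar representatives of decorated rooted trees.  A node carries:
`noise` (the presence of a noise-type edge `Ξ` at this node, i.e. the symbol `ζ_l`),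
`grayNoise` (a grey noise symbol `grayΞ`), a polynomial decoration `X^k`, a marker `Y^𝔳`,
and a list of branches.  A branch is either `Sum.inl ((isPrime, a), t)`,
an integration edge `ℐ_a` (`isPrime = false`) or `ℐ'_a` (`isPrime = true`) with subtree `t`,
or `Sum.inr (a, k)`, a grey integration leaf `grayℐ_a(X^k)`. -/
inductive Tree (d : ℕ) : Type where
  | node (noise grayNoise : Bool) (k : Multi d) (v : Bool)
      (bs : List (((Bool × Multi d) × Tree d) ⊕ (Multi d × Multi d)))

abbrev Branch (d : ℕ) := ((Bool × Multi d) × Tree d) ⊕ (Multi d × Multi d)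

namespace Tree

variable {d : ℕ}

def intB (a : Multi d) (t : Tree d) : Branch d := Sum.inl ((false, a), t)
def intPB (a : Multi d) (t : Tree d) : Branch d := Sum.inl ((true, a), t)
def grayB (a k : Multi d) : Branch d := Sum.inr (a, k)

def atom (l g : Bool) (k : Multi d) (v : Bool) : Tree d := .node l g k v []
/-- `𝟏·Y^𝔳`. -/
def one (v : Bool) : Tree d := atom false false 0 v
/-- `Ξ·Y^𝔳`. -/
def xi (v : Bool) : Tree d := atom true false 0 v
/-- `X^k`. -/
def poly (k : Multi d) : Tree d := atom false false k false
/-- the planted tree `ℐ_a(t)`. -/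
def plantI (a : Multi d) (t : Tree d) : Tree d := .node false false 0 false [intB a t]
/-- the planted tree `ℐ'_a(t)`. -/
def plantIP (a : Multi d) (t : Tree d) : Tree d := .node false false 0 false [intPB a t]
/-- the planted grey tree `grayℐ_a(X^k)`. -/
def plantG (a k : Multi d) : Tree d := .node false false 0 false [grayB a k]

/-- Tree product: identification of the roots, adding the decorations. -/
def mul : Tree d → Tree d → Tree d
  | .node l g k v bs, .node l' g' k' v' bs' =>
      .node (l || l') (g || g') (k + k') (v || v') (bs ++ bs')

/-- `ζ_l Y^𝔳 ∏ᵢ ℐ_{aᵢ}(τᵢ)`. -/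
def mk0 (l : Bool) (v : Bool) (bs : List (Multi d × Tree d)) : Tree d :=
  .node l false 0 v (bs.map fun p => intB p.1 p.2)

/-- `ζ_l X^k Y^𝔳 ∏ᵢ ℐ_{aᵢ}(τᵢ)`. -/
def mkX (l : Bool) (k : Multi d) (v : Bool) (bs : List (Multi d × Tree d)) : Tree d :=
  .node l false k v (bs.map fun p => intB p.1 p.2)

end Tree

namespace Tree
variable {d : ℕ}

/-- Lift of a relation on trees to branches: equality of edge labels plus the
relation on subtrees. -/
def BRel (r : Tree d → Tree d → Prop) : Branch d → Branch d → Prop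
  | Sum.inl ((p, a), t), Sum.inl ((p', a'), t') => p = p' ∧ a = a' ∧ r t t'
  | Sum.inr x, Sum.inr y => x = y
  | _, _ => False

/-- Fuelled version of non-planar equality of decorated trees. -/
def TEquivN : ℕ → Tree d → Tree d → Prop
  | 0, _, _ => False
  | n + 1, .node l g k v bs, .node l' g' k' v' bs' =>
      l = l' ∧ g = g' ∧ k = k' ∧ v = v' ∧
        ∃ e : Fin bs.length ≃ Fin bs'.length,
          ∀ i : Fin bs.length, BRel (TEquivN n) (bs.get i) (bs'.get (e i))

/-- Two planar trees represent the same non-planar decorated tree. -/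
def TEquiv (t t' : Tree d) : Prop := ∃ n, TEquivN n t t'

end Tree

/-- Non-planar decorated trees. -/
abbrev QTree (d : ℕ) := Quot (@Tree.TEquiv d)

/-- The class of a planar representative. -/
def qk {d : ℕ} (t : Tree d) : QTree d := Quot.mk _ t

/-- A choice of planar representative. -/
def qout {d : ℕ} (c : QTree d) : Tree d := (Quot.exists_rep c).choose

namespace Tree

variable {d : ℕ}

/-- Fuelled symmetry factor. -/
def SfacN : ℕ → Tree d → ℕ
  | 0, _ => 1
  | n + 1, .node _ _ k _ bs =>
      mfact k *
        Nat.card {e : Equiv.Perm (Fin bs.length) //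
          ∀ i, BRel TEquiv (bs.get (e i)) (bs.get i)} *
        (bs.map fun b => match b with
          | Sum.inl (_, t) => SfacN n t
          | Sum.inr _ => 1).prod

/-- The symmetry factor `S(τ)`. -/
def Sfac (t : Tree d) : ℕ := SfacN (sizeOf t) t

/-- Fuelled degree. -/
def degN (α lam : ℝ) : ℕ → Tree d → ℝ
  | 0, _ => 0
  | n + 1, .node l _ k _ bs =>
      (if l then α else 0) + sNorm lam k +
        (bs.map fun b => match b with
          | Sum.inl ((p, a), t) => degN α lam n t + (if p then 0 else lam) - sNorm lam a
          | Sum.inr _ => 0).sum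

/-- The degree of a decorated tree (`α` is the regularity of the noise,
`lam` the order `λ` of the operator). -/
def deg (α lam : ℝ) (t : Tree d) : ℝ := degN α lam (sizeOf t) t

/-- Fuelled number of `ℐ'`-edges. -/
def primeCountN : ℕ → Tree d → ℕ
  | 0, _ => 0
  | n + 1, .node _ _ _ _ bs =>
      (bs.map fun b => match b with
        | Sum.inl ((p, _), t) => (if p then 1 else 0) + primeCountN n t
        | Sum.inr _ => 0).sum

def primeCount (t : Tree d) : ℕ := primeCountN (sizeOf t) t

/-- Fuelled shape predicate; the flags allow polynomial decorations, grey
decorations and `ℐ'`-edges respectively. -/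
def ShapeN (aP aG aPr : Bool) : ℕ → Tree d → Prop
  | 0, _ => False
  | n + 1, .node _ g k _ bs =>
      (aG = true ∨ g = false) ∧ (aP = true ∨ k = 0) ∧
        ∀ b ∈ bs,
          (∃ p a t, b = Sum.inl ((p, a), t) ∧ (aPr = true ∨ p = false) ∧
              ShapeN aP aG aPr n t) ∨
            (aG = true ∧ ∃ x, b = Sum.inr x)

def Shape (aP aG aPr : Bool) (t : Tree d) : Prop := ∃ n, ShapeN aP aG aPr n t

/-- `T_0`: only `ℐ`- and `Ξ`-edges, trivial polynomial decorations. -/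
def IsT0 (t : Tree d) : Prop := Shape false false false t
/-- `T_0^X`: polynomial decorations allowed. -/
def IsT0X (t : Tree d) : Prop := Shape true false false t
/-- `T_0^𝔤`: grey decorations allowed. -/
def IsT0g (t : Tree d) : Prop := Shape false true false t
/-- `T_0^{X,𝔤}`. -/
def IsT0Xg (t : Tree d) : Prop := Shape true true false t
/-- `T_1`: at most one `ℐ'`-edge. -/
def IsT1 (t : Tree d) : Prop := Shape false false true t ∧ primeCount t ≤ 1
/-- `T_1^X`. -/
def IsT1X (t : Tree d) : Prop := Shape true false true t ∧ primeCount t ≤ 1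

/-- Fuelled predicate: every node carries the marker `Y^{v₀}`. -/
def VAllN (v0 : Bool) : ℕ → Tree d → Prop
  | 0, _ => False
  | n + 1, .node _ _ _ v bs =>
      v = v0 ∧ ∀ b ∈ bs, ∀ pa t, b = Sum.inl (pa, t) → VAllN v0 n t

def VAll (v0 : Bool) (t : Tree d) : Prop := ∃ n, VAllN v0 n t

/-- Fuelled predicate: all edge decorations are `0`. -/
def Dec0N : ℕ → Tree d → Prop
  | 0, _ => False
  | n + 1, .node _ _ _ _ bs =>
      ∀ b ∈ bs, ∀ pa t, b = Sum.inl (pa, t) → (pa.2 = (0 : Multi d) ∧ Dec0N n t)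

def Dec0 (t : Tree d) : Prop := ∃ n, Dec0N n t

/-- Fuelled predicate: the tree contains a grey symbol. -/
def hasGrayN : ℕ → Tree d → Prop
  | 0, _ => False
  | n + 1, .node _ g _ _ bs =>
      g = true ∨ ∃ b ∈ bs,
        (∃ x, b = Sum.inr x) ∨ (∃ pa t, b = Sum.inl (pa, t) ∧ hasGrayN n t)

def HasGray (t : Tree d) : Prop := ∃ n, hasGrayN n t

/-- Fuelled inverse of the grey decorations (`graydown`): erase `grayΞ`,
transfer the polynomial of each grey edge to the node decoration. -/
def graydownN : ℕ → Tree d → Tree d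
  | 0, t => t
  | n + 1, .node l _ k v bs =>
      .node l false
        (k + (bs.map fun b => match b with
          | Sum.inr (_, kk) => kk
          | _ => 0).sum) v
        (bs.filterMap fun b => match b with
          | Sum.inl ((p, a), t) => some (Sum.inl ((p, a), graydownN n t))
          | Sum.inr _ => none)

def graydown (t : Tree d) : Tree d := graydownN (sizeOf t) t

end Tree

/-! ### Formal linear combinations of decorated trees -/

/-- A (possibly infinite) formal linear combination of non-planar decorated trees. -/
abbrev Ser (d : ℕ) := QTree d → ℝ

/-- A formal linear combination of tensor products of decorated trees. -/
abbrev Ser2 (d : ℕ) := QTree d × QTree d → ℝ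

/-- The basis element given by a planar tree. -/
def dqT {d : ℕ} (t : Tree d) : Ser d := fun x => if x = qk t then 1 else 0

/-- The basis element given by a class. -/
def dqC {d : ℕ} (c : QTree d) : Ser d := fun x => if x = c then 1 else 0

/-- The basis element `s ⊗ t`. -/
def dq2 {d : ℕ} (s t : Tree d) : Ser2 d := fun x => if x = (qk s, qk t) then 1 else 0

/-- Linear extension of a tree-indexed family of series to series. -/
def extT {d : ℕ} (F : QTree d → Ser d) (S : Ser d) : Ser d :=
  fun x => ∑ᶠ c : QTree d, S c * F c x

/-- Linear extension, with values in tensors. -/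
def extS2 {d : ℕ} (F : QTree d → Ser2 d) (S : Ser d) : Ser2 d :=
  fun x => ∑ᶠ c : QTree d, S c * F c x

/-- Apply linear maps in each tensor slot. -/
def ap2 {d : ℕ} (F G : QTree d → Ser d) (S : Ser2 d) : Ser2 d :=
  fun x => ∑ᶠ p : QTree d × QTree d, S p * F p.1 x.1 * G p.2 x.2

/-- `(id ⊗ f)` for a map `f` on planar trees. -/
def mapSnd {d : ℕ} (f : Tree d → Tree d) (S : Ser2 d) : Ser2 d :=
  fun x => ∑ᶠ p : QTree d × QTree d,
    S p * (if x.1 = p.1 ∧ x.2 = qk (f (qout p.2)) then 1 else 0)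

/-- `(f ⊗ id)` for a map `f` on planar trees. -/
def mapFst {d : ℕ} (f : Tree d → Tree d) (S : Ser2 d) : Ser2 d :=
  fun x => ∑ᶠ p : QTree d × QTree d,
    S p * (if x.2 = p.2 ∧ x.1 = qk (f (qout p.1)) then 1 else 0)

/-- `(f ⊗ id)` killing the trees containing grey symbols (the convention
`ℐ_a(τ) = 0` for `τ` containing a grey symbol). -/
def mapFstKill {d : ℕ} (f : Tree d → Tree d) (S : Ser2 d) : Ser2 d :=
  fun x => ∑ᶠ p : QTree d × QTree d,
    S p * (if ¬ Tree.HasGray (qout p.1) ∧ x.2 = p.2 ∧ x.1 = qk (f (qout p.1)) then 1 else 0)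

/-- Product of series (bilinear extension of the tree product). -/
def mulS {d : ℕ} (A B : Ser d) : Ser d :=
  fun x => ∑ᶠ p : QTree d × QTree d,
    A p.1 * B p.2 * (if x = qk (Tree.mul (qout p.1) (qout p.2)) then 1 else 0)

/-- Product of tensor series. -/
def mul2 {d : ℕ} (A B : Ser2 d) : Ser2 d :=
  fun x => ∑ᶠ p : (QTree d × QTree d) × (QTree d × QTree d),
    A p.1 * B p.2 *
      (if x.1 = qk (Tree.mul (qout p.1.1) (qout p.2.1)) ∧
          x.2 = qk (Tree.mul (qout p.1.2) (qout p.2.2)) then 1 else 0)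

/-- A branch specification: a concrete grey leaf, or an edge whose subtree is a series. -/
inductive BSpec (d : ℕ) where
  | ser (isP : Bool) (a : Multi d) (S : Ser d)
  | gray (a k : Multi d)

def BSpec.coeff {d : ℕ} : BSpec d → QTree d → ℝ
  | .ser _ _ S, c => S c
  | .gray _ _, c => if c = qk (Tree.one false) then 1 else 0

def BSpec.toBranch {d : ℕ} : BSpec d → QTree d → Branch d
  | .ser p a _, c => Sum.inl ((p, a), qout c)
  | .gray a k, _ => Tree.grayB a k

/-- The tree `node(l,g,k,v; branches)` where the subtree of each (non-grey)
branch is drawn from a series; this is the multilinear extension of the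
node-building operation to series. -/
def nodeSer {d : ℕ} (l g : Bool) (k : Multi d) (v : Bool) (specs : List (BSpec d)) : Ser d :=
  fun x => ∑ᶠ cs : List (QTree d),
    if cs.length = specs.length then
      (List.zipWith BSpec.coeff specs cs).prod *
        dqT (Tree.node l g k v (List.zipWith BSpec.toBranch specs cs)) x
    else 0

/-- Branch specifications of a list of (decoration, subtree) pairs. -/
def specsOf {d : ℕ} (bs : List (Multi d × Tree d)) : List (BSpec d) :=
  bs.map fun p => BSpec.ser false p.1 (dqT p.2)

/-- Branch specifications of a list of branches. -/
def specsOfB {d : ℕ} (bs : List (Branch d)) : List (BSpec d) :=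
  bs.map fun b => match b with
    | Sum.inl ((p, a), t) => BSpec.ser p a (dqT t)
    | Sum.inr ak => BSpec.gray ak.1 ak.2

/-- The symmetry-factor pairing `⟨σ,τ⟩ = S(τ) 𝟙_{σ=τ}`, extended bilinearly. -/
def pairS {d : ℕ} (A B : Ser d) : ℝ :=
  ∑ᶠ c : QTree d, A c * B c * (Tree.Sfac (qout c) : ℝ)

/-- The pairing on tensors, `⟨σ₁⊗σ₂, τ₁⊗τ₂⟩ = ⟨σ₁,τ₁⟩⟨σ₂,τ₂⟩`. -/
def pair2 {d : ℕ} (A B : Ser2 d) : ℝ :=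
  ∑ᶠ p : QTree d × QTree d,
    A p * B p * (Tree.Sfac (qout p.1) : ℝ) * (Tree.Sfac (qout p.2) : ℝ)

/-- Symmetry factor of a class. -/
def SQ {d : ℕ} (c : QTree d) : ℕ := Tree.Sfac (qout c)

/-- Degree of a class. -/
def degQ {d : ℕ} (α lam : ℝ) (c : QTree d) : ℝ := Tree.deg α lam (qout c)

def IsT0Q {d : ℕ} (c : QTree d) : Prop := ∃ t, qk t = c ∧ Tree.IsT0 t
/-- classes of trees in `T_0^*` (marker `𝔳 = 1` everywhere). -/
def IsT0starQ {d : ℕ} (c : QTree d) : Prop := ∃ t, qk t = c ∧ Tree.IsT0 t ∧ Tree.VAll true t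
/-- classes of trees in `T_0^{X,*}`. -/
def IsT0XstarQ {d : ℕ} (c : QTree d) : Prop := ∃ t, qk t = c ∧ Tree.IsT0X t ∧ Tree.VAll true t


/-! ### Defining equations of the maps on decorated trees -/

/-- Defining recursion of the localisation map `M_loc`:
`M_loc (ζ_l Y^𝔳 ∏ᵢ ℐ_{aᵢ}(τᵢ) ∏ⱼ grayℐ_{bⱼ}(X^{kⱼ}))
  = Σ_k (X^k/k!) ζ_l Y^𝔳 ∏ᵢ ℐ_{aᵢ}(M_loc τᵢ) ∏ⱼ grayℐ_{bⱼ}(X^{kⱼ})`. -/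
def MlocEqs {d : ℕ} (Mloc : QTree d → Ser d) : Prop :=
  ∀ (l g : Bool) (v : Bool) (bs : List (Branch d)),
    Tree.IsT0g (Tree.node l g 0 v bs) →
    Mloc (qk (Tree.node l g 0 v bs)) = fun x =>
      ∑ᶠ k : Multi d, (1 / (mfact k : ℝ)) *
        nodeSer l g k v (bs.map fun b => match b with
          | Sum.inl ((p, a), t) => BSpec.ser p a (Mloc (qk t))
          | Sum.inr ak => BSpec.gray ak.1 ak.2) x

/-- Defining recursion of the abstract derivative `↑_μ`:
it vanishes on trees with no edge and
`↑_μ (ζ_l Y^𝔳 ∏ᵢ ℐ_{aᵢ}(τᵢ)) = ζ_l Y^𝔳 Σᵢ (ℐ'_{aᵢ}(τᵢ) + ℐ_{aᵢ}(↑_μ τᵢ)) ∏_{j≠i} ℐ_{aⱼ}(τⱼ)`. -/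
def UpEqs {d : ℕ} (up : QTree d → Ser d) : Prop :=
  ∀ (l : Bool) (v : Bool) (bs : List (Multi d × Tree d)), (∀ p ∈ bs, Tree.IsT0 p.2) →
    up (qk (Tree.mk0 l v bs)) =
      (∑ i : Fin bs.length,
        dqT (Tree.node l false 0 v
          ((bs.map fun p => Tree.intB p.1 p.2).set i.1
            (Tree.intPB (bs.get i).1 (bs.get i).2)))) +
      ∑ i : Fin bs.length,
        nodeSer l false 0 v
          ((specsOf bs).set i.1 (BSpec.ser false (bs.get i).1 (up (qk (bs.get i).2))))

/-- Defining recursion of the grafting operator `↷_a` (grafting with an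
`ℐ'_a`-edge on the nodes with marker `𝔳 = 1`; grafting at the root switches the
marker of the root to `0`). -/
def GraftEqs {d : ℕ} (graft : Multi d → QTree d → QTree d → Ser d) : Prop :=
  ∀ (a : Multi d) (σ : Tree d), Tree.IsT0 σ →
    ∀ (l : Bool) (bs : List (Multi d × Tree d)), (∀ p ∈ bs, Tree.IsT0 p.2) →
      (graft a (qk σ) (qk (Tree.mk0 l true bs)) =
        dqT (Tree.node l false 0 false
          (Tree.intPB a σ :: bs.map fun p => Tree.intB p.1 p.2)) +
        ∑ i : Fin bs.length,
          nodeSer l false 0 true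
            ((specsOf bs).set i.1
              (BSpec.ser false (bs.get i).1 (graft a (qk σ) (qk (bs.get i).2))))) ∧
      (graft a (qk σ) (qk (Tree.mk0 l false bs)) =
        ∑ i : Fin bs.length,
          nodeSer l false 0 false
            ((specsOf bs).set i.1
              (BSpec.ser false (bs.get i).1 (graft a (qk σ) (qk (bs.get i).2)))))

/-- Defining equations of the grafting at the root only, `↷_a^{root}`. -/
def GraftRootEqs {d : ℕ} (graftR : Multi d → QTree d → QTree d → Ser d) : Prop :=
  ∀ (a : Multi d) (σ : Tree d) (l : Bool) (v : Bool) (bs : List (Multi d × Tree d)),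
    graftR a (qk σ) (qk (Tree.mk0 l v bs)) =
      if v then
        dqT (Tree.node l false 0 false
          (Tree.intPB a σ :: bs.map fun p => Tree.intB p.1 p.2))
      else 0

/-- Defining recursion of the grey grafting `gray↷_a` on `𝒯_0^X`. -/
def GAEqs {d : ℕ} (GA : Multi d → QTree d → Ser d) : Prop :=
  ∀ (a : Multi d) (l : Bool) (k : Multi d) (v : Bool) (bs : List (Multi d × Tree d)),
    (∀ p ∈ bs, Tree.IsT0X p.2) →
    GA a (qk (Tree.mkX l k v bs)) =
      (fun x => (if v = true then (1 : ℝ) else 0) *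
        ∑ᶠ j : Multi d, if j ≤ a then
          (mbinom k j : ℝ) *
            dqT (Tree.node l false (k - j) v
              (Tree.grayB (a - j) j :: bs.map fun p => Tree.intB p.1 p.2)) x
        else 0) +
      ∑ i : Fin bs.length,
        nodeSer l false k v
          ((specsOf bs).set i.1 (BSpec.ser false (bs.get i).1 (GA a (qk (bs.get i).2))))

/-- Defining recursion of the grey grafting `gray↷_{a,k}` on `𝒯_0^𝔤`. -/
def GAKEqs {d : ℕ} (GAK : Multi d → Multi d → QTree d → Ser d) : Prop :=
  ∀ (a k0 : Multi d) (l g : Bool) (v : Bool) (bs : List (Branch d)),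
    Tree.IsT0g (Tree.node l g 0 v bs) →
    GAK a k0 (qk (Tree.node l g 0 v bs)) =
      (fun x => (if v = true then (1 : ℝ) else 0) *
        dqT (Tree.node l g 0 v (Tree.grayB a k0 :: bs)) x) +
      ∑ i : Fin bs.length,
        (match bs.get i with
          | Sum.inl ((false, ai), ti) =>
              nodeSer l g 0 v ((specsOfB bs).set i.1
                (BSpec.ser false ai (GAK a k0 (qk ti))))
          | _ => 0)

/-- Defining recursion of the coproduct `Δ_a`, dual to `↷_a`. -/
def DaEqs {d : ℕ} (Da : Multi d → QTree d → Ser2 d) : Prop :=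
  ∀ a : Multi d,
    (Da a (qk (Tree.one false)) = dq2 (Tree.one false) (Tree.one false)) ∧
    (Da a (qk (Tree.xi false)) = dq2 (Tree.xi false) (Tree.one true)) ∧
    (∀ (b : Multi d) (t : Tree d), Tree.IsT0 t →
      Da a (qk (Tree.plantIP b t)) =
        mapSnd (Tree.plantI b) (Da a (qk t)) +
          (if a = b then dq2 t (Tree.one true) else 0)) ∧
    (∀ (b : Multi d) (t : Tree d), Tree.IsT0 t →
      Da a (qk (Tree.plantI b t)) = mapSnd (Tree.plantI b) (Da a (qk t))) ∧
    (∀ s t : Tree d, Tree.IsT1 s → Tree.IsT1 t → Tree.VAll false s → Tree.VAll false t →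
      Da a (qk (Tree.mul s t)) =
        mul2 (Da a (qk s)) (dq2 (Tree.one false) t) +
          mul2 (dq2 (Tree.one false) s) (Da a (qk t)))

/-- Defining recursion of the elementary-cuts coproduct `Δ_1`. -/
def D1Eqs {d : ℕ} (D1 : QTree d → Ser2 d) : Prop :=
  (D1 (qk (Tree.one false)) = dq2 (Tree.one false) (Tree.one false)) ∧
  (D1 (qk (Tree.xi false)) = dq2 (Tree.xi false) (Tree.one true)) ∧
  (∀ (a : Multi d) (t : Tree d), Tree.IsT0 t →
    D1 (qk (Tree.plantI a t)) =
      mapSnd (Tree.plantI a) (D1 (qk t)) + dq2 (Tree.plantIP a t) (Tree.one true)) ∧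
  (∀ s t : Tree d, Tree.IsT0 s → Tree.IsT0 t → Tree.VAll false s → Tree.VAll false t →
    D1 (qk (Tree.mul s t)) =
      mul2 (D1 (qk s)) (dq2 (Tree.one false) t) +
        mul2 (dq2 (Tree.one false) s) (D1 (qk t)))

/-- Defining recursion of the extraction-at-the-root coproduct `Δ_r`. -/
def DrEqs {d : ℕ} (Dr : QTree d → Ser2 d) : Prop :=
  (∀ v : Bool, Dr (qk (Tree.one v)) = dq2 (Tree.one v) (Tree.one false)) ∧
  (Dr (qk (Tree.xi false)) =
    dq2 (Tree.atom false true 0 false) (Tree.xi false) + dq2 (Tree.xi false) (Tree.one false)) ∧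
  (∀ i : Fin (d + 1),
    Dr (qk (Tree.poly (Pi.single i 1))) =
      dq2 (Tree.one false) (Tree.poly (Pi.single i 1)) +
        dq2 (Tree.poly (Pi.single i 1)) (Tree.one false)) ∧
  (∀ (a : Multi d) (t : Tree d), Tree.IsT0X t →
    Dr (qk (Tree.plantI a t)) =
      mapFstKill (Tree.plantI a) (Dr (qk t)) +
        fun x => ∑ᶠ k : Multi d,
          (1 / (mfact k : ℝ)) * dq2 (Tree.plantG a k) (Tree.plantI (a + k) t) x) ∧
  (∀ (a : Multi d) (t : Tree d), Tree.IsT0X t →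
    Dr (qk (Tree.plantIP a t)) = fun x =>
      ∑ᶠ k : Multi d,
        (1 / (mfact k : ℝ)) * dq2 (Tree.plantG a k) (Tree.plantIP (a + k) t) x) ∧
  (∀ s t : Tree d, Tree.IsT1X s → Tree.IsT1X t →
    Dr (qk (Tree.mul s t)) = mul2 (Dr (qk s)) (Dr (qk t)))

/-- Defining recursion of the map `⇑` (summing over all edge decorations). -/
def Up2Eqs {d : ℕ} (Up2 : QTree d → Ser d) : Prop :=
  (∀ (l : Bool) (v : Bool), Up2 (qk (Tree.atom l false 0 v)) = dqT (Tree.atom l false 0 v)) ∧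
  (∀ t : Tree d, Tree.IsT1 t → Tree.Dec0 t →
    (Up2 (qk (Tree.plantI 0 t)) = fun x =>
      ∑ᶠ a : Multi d, nodeSer false false 0 false [BSpec.ser false a (Up2 (qk t))] x) ∧
    (Up2 (qk (Tree.plantIP 0 t)) = fun x =>
      ∑ᶠ a : Multi d, nodeSer false false 0 false [BSpec.ser true a (Up2 (qk t))] x)) ∧
  (∀ s t : Tree d, Tree.IsT1 s → Tree.IsT1 t → Tree.Dec0 s → Tree.Dec0 t →
    Up2 (qk (Tree.mul s t)) = mulS (Up2 (qk s)) (Up2 (qk t)))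


namespace Tree
variable {d : ℕ}

/-- Fuelled list of the planar trees `↑_μ^e τ`, for `e` ranging over the
`ℐ`-edges of `τ`: the type of the edge `e` is switched from `ℐ` to `ℐ'`. -/
def switchesN : ℕ → Tree d → List (Tree d)
  | 0, _ => []
  | n + 1, .node l g k v bs =>
      (List.finRange bs.length).flatMap fun i =>
        match bs.get i with
        | Sum.inl ((false, a), t) =>
            Tree.node l g k v (bs.set i.1 (intPB a t)) ::
              (switchesN n t).map fun t' => Tree.node l g k v (bs.set i.1 (intB a t'))
        | _ => []

/-- The list of the planar trees `↑_μ^e τ`, `e ∈ E_τ` an `ℐ`-edge of `τ`. -/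
def switches (t : Tree d) : List (Tree d) := switchesN (sizeOf t) t

end Tree

/-- The insertion product `ℐ'_a(σ) ↷ τ = σ ↷_a τ` (vanishing on anything that
is not a planted tree `ℐ'_a(σ)`), as a pairing of the two components of a tensor. -/
def insApply {d : ℕ} (graft : Multi d → QTree d → QTree d → Ser d)
    (c₁ c₂ : QTree d) : Ser d :=
  match qout c₁ with
  | .node false false k false [Sum.inl ((true, a), σ)] =>
      if k = 0 then graft a (qk σ) c₂ else 0
  | _ => 0

/-- The insertion product applied to a tensor series. -/
def insProd {d : ℕ} (graft : Multi d → QTree d → QTree d → Ser d)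
    (S : Ser2 d) : Ser d :=
  fun x => ∑ᶠ p : QTree d × QTree d, S p * insApply graft p.1 p.2 x

/-- Recognise the class of a planted tree `ℐ_0(σ)` and return the class of `σ`. -/
def strip0 {d : ℕ} (c : QTree d) : Option (QTree d) :=
  match qout c with
  | .node false false k false [Sum.inl ((false, a), σ)] =>
      if k = 0 ∧ a = 0 then some (qk σ) else none
  | _ => none


namespace Tree
variable {d : ℕ}
/-- Decorations of the `ℐ`/`ℐ'`-edges at the root. -/
def intDecs (bs : List (Branch d)) : List (Multi d) :=
  bs.filterMap fun b => match b with
    | Sum.inl ((_, a), _) => some a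
    | Sum.inr _ => none
/-- Decorations of the grey edges at the root. -/
def grayDecs (bs : List (Branch d)) : List (Multi d) :=
  bs.filterMap fun b => match b with
    | Sum.inr (a, _) => some a
    | Sum.inl _ => none
/-- Subtrees of the `ℐ`/`ℐ'`-edges at the root. -/
def intSubs (bs : List (Branch d)) : List (Tree d) :=
  bs.filterMap fun b => match b with
    | Sum.inl (_, t) => some t
    | Sum.inr _ => none
end Tree

end Flow

namespace Flow

/-!
On trees of `T_0^0`, each of the three operators is a sum of planar trees counted with multiplicity
one: `↑_μ t` is the sum of all `w` obtained from `t` by switching one edge to type `ℐ'`, `s ↷_a t`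
is the sum of all `w` obtained from `t` by grafting `s` via an `ℐ'_a`-edge at one marked node, and
`⇑ t` is the sum of all `w` which become `t` when every edge decoration is set to `0`.
Multiplicities stay equal to one under composition because the unique `ℐ'`-edge of the result
determines both the node acted on and the tree acted on. Both identities thereby reduce to
equalities of sets of planar trees, which hold because setting the decorations to `0` commutes with
switching and with grafting.
-/

section

variable {d : ℕ}

namespace Tree

theorem sizeOf_lt_of_mem {l g : Bool} {k : Multi d} {v : Bool} {bs : List (Branch d)}
    {e : Bool × Multi d} {t : Tree d} (h : Sum.inl (e, t) ∈ bs) :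
    sizeOf t < sizeOf (node l g k v bs) := by
  have := List.sizeOf_lt_of_mem h
  simp only [Sum.inl.sizeOf_spec, Prod.mk.sizeOf_spec] at this
  simp only [node.sizeOf_spec]
  lia

theorem node_induction {P : Tree d → Prop}
    (node : ∀ l g k v (bs : List (Branch d)),
      (∀ e t, Sum.inl (e, t) ∈ bs → P t) → P (node l g k v bs)) (t : Tree d) : P t := by
  induction hn : sizeOf t using Nat.strong_induction_on generalizing t with
  | _ n ih =>
    obtain ⟨l, g, k, v, bs⟩ := t
    exact node l g k v bs fun e t ht => ih _ (hn ▸ sizeOf_lt_of_mem ht) t rfl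

theorem BRel.mono {r r' : Tree d → Tree d → Prop} (h : ∀ t t', r t t' → r' t t') :
    ∀ {b b' : Branch d}, BRel r b b' → BRel r' b b'
  | .inl _, .inl _, ⟨hp, ha, ht⟩ => ⟨hp, ha, h _ _ ht⟩
  | .inr _, .inr _, hb => hb

theorem BRel.exists {r : ℕ → Tree d → Tree d → Prop} :
    ∀ {b b' : Branch d}, BRel (fun t t' => ∃ n, r n t t') b b' → ∃ n, BRel (r n) b b'
  | .inl _, .inl _, ⟨hp, ha, n, ht⟩ => ⟨n, hp, ha, ht⟩
  | .inr _, .inr _, hb => ⟨0, hb⟩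

theorem TEquivN.succ {n : ℕ} {t t' : Tree d} (h : TEquivN n t t') : TEquivN (n + 1) t t' := by
  induction n generalizing t t' with
  | zero => exact h.elim
  | succ n ih =>
    obtain ⟨l, g, k, v, bs⟩ := t
    obtain ⟨l', g', k', v', bs'⟩ := t'
    obtain ⟨hl, hg, hk, hv, e, he⟩ := h
    exact ⟨hl, hg, hk, hv, e, fun i => (he i).mono fun _ _ => ih⟩

theorem monotone_TEquivN : Monotone (TEquivN : ℕ → Tree d → Tree d → Prop) :=
  monotone_nat_of_le_succ fun _ _ _ => TEquivN.succ

/-- Equality of two lists of branches up to a permutation and non-planar equality of subtrees. -/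
def BranchesEquiv (bs bs' : List (Branch d)) : Prop :=
  ∃ e : Fin bs.length ≃ Fin bs'.length, ∀ i, BRel TEquiv (bs.get i) (bs'.get (e i))

theorem tEquiv_node {l g l' g' v v' : Bool} {k k' : Multi d} {bs bs' : List (Branch d)} :
    TEquiv (node l g k v bs) (node l' g' k' v' bs') ↔
      l = l' ∧ g = g' ∧ k = k' ∧ v = v' ∧ BranchesEquiv bs bs' := by
  constructor
  · rintro ⟨_ | n, h⟩
    · exact h.elim
    · obtain ⟨hl, hg, hk, hv, e, he⟩ := h
      exact ⟨hl, hg, hk, hv, e, fun i => (he i).mono fun _ _ ht => ⟨n, ht⟩⟩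
  · rintro ⟨hl, hg, hk, hv, e, he⟩
    have eventually_rel (i) : ∀ᶠ n in Filter.atTop,
        BRel (TEquivN n) (bs.get i) (bs'.get (e i)) := by
      obtain ⟨n, hn⟩ := (he i).exists
      exact Filter.eventually_atTop.2 ⟨n, fun m hm => hn.mono (monotone_TEquivN hm)⟩
    obtain ⟨n, hn⟩ := (Filter.eventually_all.2 eventually_rel).exists
    exact ⟨n + 1, hl, hg, hk, hv, e, hn⟩

theorem TEquiv.refl (t : Tree d) : TEquiv t t := by
  induction t using node_induction with
  | node l g k v bs ih =>
    refine tEquiv_node.2 ⟨rfl, rfl, rfl, rfl, Equiv.refl _, fun i => ?_⟩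
    have hi : bs.get i ∈ bs := List.get_mem _ _
    rw [Equiv.refl_apply]
    rcases hb : bs.get i with ⟨e, t⟩ | x
    · exact ⟨rfl, rfl, ih e t (hb ▸ hi)⟩
    · exact rfl

theorem TEquiv.symm {t t' : Tree d} (h : TEquiv t t') : TEquiv t' t := by
  induction t using node_induction generalizing t' with
  | node l g k v bs ih =>
    obtain ⟨l', g', k', v', bs'⟩ := t'
    obtain ⟨rfl, rfl, rfl, rfl, e, he⟩ := tEquiv_node.1 h
    refine tEquiv_node.2 ⟨rfl, rfl, rfl, rfl, e.symm, fun j => ?_⟩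
    have hj := he (e.symm j)
    rw [e.apply_symm_apply] at hj
    have hi : bs.get (e.symm j) ∈ bs := List.get_mem _ _
    rcases hb : bs.get (e.symm j) with ⟨p, t⟩ | x <;>
      rcases hb' : bs'.get j with ⟨p', t'⟩ | x' <;> rw [hb, hb'] at hj
    · exact ⟨hj.1.symm, hj.2.1.symm, ih _ _ (hb ▸ hi) hj.2.2⟩
    · exact hj.elim
    · exact hj.elim
    · exact Eq.symm hj

theorem TEquiv.trans {t t' t'' : Tree d} (h : TEquiv t t') (h' : TEquiv t' t'') :
    TEquiv t t'' := by
  induction t using node_induction generalizing t' t'' with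
  | node l g k v bs ih =>
    obtain ⟨l', g', k', v', bs'⟩ := t'
    obtain ⟨l'', g'', k'', v'', bs''⟩ := t''
    obtain ⟨rfl, rfl, rfl, rfl, e, he⟩ := tEquiv_node.1 h
    obtain ⟨rfl, rfl, rfl, rfl, e', he'⟩ := tEquiv_node.1 h'
    refine tEquiv_node.2 ⟨rfl, rfl, rfl, rfl, e.trans e', fun i => ?_⟩
    have hi : bs.get i ∈ bs := List.get_mem _ _
    have h₁ := he i
    have h₂ := he' (e i)
    rcases hb : bs.get i with ⟨p, t⟩ | x <;> rcases hb' : bs'.get (e i) with ⟨p', t'⟩ | x' <;>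
      rcases hb'' : bs''.get (e' (e i)) with ⟨p'', t''⟩ | x'' <;>
      simp only [hb, hb', hb'', BRel, Equiv.trans_apply] at h₁ h₂ ⊢
    · exact ⟨h₁.1.trans h₂.1, h₁.2.1.trans h₂.2.1, ih _ _ (hb ▸ hi) h₁.2.2 h₂.2.2⟩
    · exact h₁.trans h₂

theorem equivalence_tEquiv : Equivalence (TEquiv (d := d)) :=
  ⟨TEquiv.refl, TEquiv.symm, TEquiv.trans⟩

theorem BranchesEquiv.append {bs bs' cs cs' : List (Branch d)}
    (h : BranchesEquiv bs bs') (h' : BranchesEquiv cs cs') :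
    BranchesEquiv (bs ++ cs) (bs' ++ cs') := by
  obtain ⟨e, he⟩ := h
  obtain ⟨f, hf⟩ := h'
  let split (as as' : List (Branch d)) :
      Fin (as ++ as').length ≃ Fin as.length ⊕ Fin as'.length :=
    (finCongr List.length_append).trans finSumFinEquiv.symm
  refine ⟨(split bs cs).trans ((Equiv.sumCongr e f).trans (split bs' cs').symm), fun i => ?_⟩
  obtain ⟨j | j, rfl⟩ := (split bs cs).symm.surjective i
  · simpa [split] using he j
  · simpa [split] using hf j

theorem TEquiv.mul {s s' t t' : Tree d} (hs : TEquiv s s') (ht : TEquiv t t') :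
    TEquiv (mul s t) (mul s' t') := by
  obtain ⟨l, g, k, v, bs⟩ := s
  obtain ⟨l', g', k', v', bs'⟩ := s'
  obtain ⟨m, h, j, w, cs⟩ := t
  obtain ⟨m', h', j', w', cs'⟩ := t'
  obtain ⟨rfl, rfl, rfl, rfl, hbs⟩ := tEquiv_node.1 hs
  obtain ⟨rfl, rfl, rfl, rfl, hcs⟩ := tEquiv_node.1 ht
  exact tEquiv_node.2 ⟨rfl, rfl, rfl, rfl, hbs.append hcs⟩

theorem TEquiv.node {l g v : Bool} {k : Multi d} {bs bs' : List (Branch d)}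
    (h : List.Forall₂ (BRel TEquiv) bs bs') : TEquiv (node l g k v bs) (node l g k v bs') := by
  refine tEquiv_node.2 ⟨rfl, rfl, rfl, rfl, finCongr h.length_eq, fun i => ?_⟩
  exact List.Forall₂.get h i.2 (h.length_eq ▸ i.2)

theorem finite_setOf_bRel {r : Tree d → Tree d → Prop} :
    ∀ b : Branch d, (∀ e t, b = Sum.inl (e, t) → {t' | r t t'}.Finite) → {b' | BRel r b b'}.Finite
  | .inl ((p, a), t), h => by
    refine ((h _ t rfl).image fun t' => Sum.inl ((p, a), t')).subset ?_
    rintro (⟨⟨p', a'⟩, t'⟩ | x) hb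
    · obtain ⟨rfl, rfl, ht⟩ := hb
      exact ⟨t', ht, rfl⟩
    · exact hb.elim
  | .inr x, _ => by
    refine (Set.finite_singleton (Sum.inr x)).subset ?_
    rintro (_ | y) hb
    · exact hb.elim
    · exact congrArg Sum.inr (Eq.symm hb)

theorem finite_setOf_tEquiv (t : Tree d) : {t' | TEquiv t t'}.Finite := by
  induction t using node_induction with
  | node l g k v bs ih =>
    obtain ⟨B, hB⟩ : ∃ B : Finset (Branch d), ∀ b ∈ bs, ∀ b', BRel TEquiv b b' → b' ∈ B := by
      have finite_branches : (⋃ b ∈ {b | b ∈ bs}, {b' | BRel TEquiv b b'}).Finite :=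
        bs.finite_toSet.biUnion fun b hb => finite_setOf_bRel b fun e t ht => ih e t (ht ▸ hb)
      exact ⟨finite_branches.toFinset, fun b hb b' h =>
        finite_branches.mem_toFinset.2 (Set.mem_biUnion hb h)⟩
    refine ((List.finite_length_eq B bs.length).image fun cs =>
      Tree.node l g k v (cs.map Subtype.val)).subset ?_
    rintro ⟨l', g', k', v', bs'⟩ h
    obtain ⟨rfl, rfl, rfl, rfl, e, he⟩ := tEquiv_node.1 h
    have hmem : ∀ b ∈ bs', b ∈ B := by
      intro b hb
      obtain ⟨j, rfl⟩ := List.get_of_mem hb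
      exact hB _ (List.get_mem bs (e.symm j)) _ (by simpa using he (e.symm j))
    lift bs' to List B using hmem with cs
    exact ⟨cs, by simpa using (Fin.equiv_iff_eq.1 ⟨e⟩).symm, rfl⟩

end Tree

theorem qk_eq_qk {t t' : Tree d} : qk t = qk t' ↔ Tree.TEquiv t t' :=
  Tree.equivalence_tEquiv.quot_mk_eq_iff t t'

theorem qk_qout (c : QTree d) : qk (qout c) = c := (Quot.exists_rep c).choose_spec

theorem qout_qk (t : Tree d) : Tree.TEquiv (qout (qk t)) t := qk_eq_qk.1 (qk_qout _)

namespace Tree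

theorem exists_forall_mem_of_monotone {α : Type*} {P : ℕ → α → Prop} (hP : Monotone P)
    {l : List α} (h : ∀ b ∈ l, ∃ n, P n b) : ∃ n, ∀ b ∈ l, P n b := by
  have eventually_of_mem : ∀ b ∈ {b | b ∈ l}, ∀ᶠ n in Filter.atTop, P n b := fun b hb => by
    obtain ⟨n, hn⟩ := h b hb
    exact Filter.eventually_atTop.2 ⟨n, fun m hm => hP hm b hn⟩
  exact ((Filter.eventually_all_finite l.finite_toSet).2 eventually_of_mem).exists

theorem ShapeN.succ {aP aG aPr : Bool} {n : ℕ} {t : Tree d} (h : ShapeN aP aG aPr n t) :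
    ShapeN aP aG aPr (n + 1) t := by
  induction n generalizing t with
  | zero => exact h.elim
  | succ n ih =>
    obtain ⟨l, g, k, v, bs⟩ := t
    obtain ⟨hg, hk, hbs⟩ := h
    exact ⟨hg, hk, fun b hb => (hbs b hb).imp_left fun ⟨p, a, t, h, hp, ht⟩ =>
      ⟨p, a, t, h, hp, ih ht⟩⟩

theorem shape_node {aP aG aPr l g v : Bool} {k : Multi d} {bs : List (Branch d)} :
    Shape aP aG aPr (node l g k v bs) ↔ (aG = true ∨ g = false) ∧ (aP = true ∨ k = 0) ∧
      ∀ b ∈ bs, (∃ p a t, b = Sum.inl ((p, a), t) ∧ (aPr = true ∨ p = false) ∧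
        Shape aP aG aPr t) ∨ (aG = true ∧ ∃ x, b = Sum.inr x) := by
  constructor
  · rintro ⟨_ | n, h⟩
    · exact h.elim
    · obtain ⟨hg, hk, hbs⟩ := h
      exact ⟨hg, hk, fun b hb => (hbs b hb).imp_left fun ⟨p, a, t, h, hp, ht⟩ =>
        ⟨p, a, t, h, hp, n, ht⟩⟩
  · rintro ⟨hg, hk, hbs⟩
    obtain ⟨n, hn⟩ := exists_forall_mem_of_monotone (l := bs)
      (P := fun n b => (∃ p a t, b = Sum.inl ((p, a), t) ∧ (aPr = true ∨ p = false) ∧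
        ShapeN aP aG aPr n t) ∨ (aG = true ∧ ∃ x, b = Sum.inr x))
      (monotone_nat_of_le_succ fun n b => Or.imp_left fun ⟨p, a, t, h, hp, ht⟩ =>
        ⟨p, a, t, h, hp, ht.succ⟩)
      fun b hb => by
        rcases hbs b hb with ⟨p, a, t, h, hp, n, ht⟩ | h
        exacts [⟨n, .inl ⟨p, a, t, h, hp, ht⟩⟩, ⟨0, .inr h⟩]
    exact ⟨n + 1, hg, hk, hn⟩

theorem Dec0N.succ {n : ℕ} {t : Tree d} (h : Dec0N n t) : Dec0N (n + 1) t := by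
  induction n generalizing t with
  | zero => exact h.elim
  | succ n ih =>
    obtain ⟨l, g, k, v, bs⟩ := t
    exact fun b hb e t hbt => (h b hb e t hbt).imp_right ih

theorem dec0_node {l g v : Bool} {k : Multi d} {bs : List (Branch d)} :
    Dec0 (node l g k v bs) ↔ ∀ e t, Sum.inl (e, t) ∈ bs → e.2 = 0 ∧ Dec0 t := by
  constructor
  · rintro ⟨_ | n, h⟩ e t ht
    · exact h.elim
    · exact (h _ ht e t rfl).imp_right fun h => ⟨n, h⟩
  · intro h
    obtain ⟨n, hn⟩ := exists_forall_mem_of_monotone (l := bs)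
      (P := fun n b => ∀ (e : Bool × Multi d) t, b = Sum.inl (e, t) → e.2 = 0 ∧ Dec0N n t)
      (monotone_nat_of_le_succ fun n b hb e t hbt => (hb e t hbt).imp_right Dec0N.succ)
      fun b hb => by
        rcases b with ⟨e, t⟩ | x
        · obtain ⟨he, n, ht⟩ := h e t hb
          exact ⟨n, by rintro _ _ ⟨⟩; exact ⟨he, ht⟩⟩
        · exact ⟨0, nofun⟩
    exact ⟨n + 1, hn⟩

theorem primeCountN_of_sizeOf_le {n : ℕ} {t : Tree d} (h : sizeOf t ≤ n) :
    primeCountN n t = primeCount t := by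
  induction t using node_induction generalizing n with
  | node l g k v bs ih =>
    obtain ⟨m, hm⟩ : ∃ m, sizeOf (node l g k v bs) = m + 1 :=
      Nat.exists_eq_add_one_of_ne_zero (by simp [node.sizeOf_spec])
    obtain ⟨n, rfl⟩ : ∃ n', n = n' + 1 := ⟨n - 1, by lia⟩
    rw [primeCount, hm, primeCountN, primeCountN]
    refine congrArg List.sum (List.map_congr_left fun b hb => ?_)
    rcases b with ⟨⟨p, a⟩, t⟩ | x
    · have ht := sizeOf_lt_of_mem (l := l) (g := g) (k := k) (v := v) hb
      dsimp only
      rw [ih _ t hb (n := n) (by lia), ih _ t hb (n := m) (by lia)]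
    · rfl

/-- The number of `ℐ'`-edges in a branch, counting the edge at its root. -/
def branchPrimeCount : Branch d → ℕ
  | .inl ((p, _), t) => (if p then 1 else 0) + primeCount t
  | .inr _ => 0

theorem primeCount_node {l g v : Bool} {k : Multi d} {bs : List (Branch d)} :
    primeCount (node l g k v bs) = (bs.map branchPrimeCount).sum := by
  rw [← primeCountN_of_sizeOf_le (Nat.le_succ _), primeCountN]
  refine congrArg List.sum (List.map_congr_left fun b hb => ?_)
  rcases b with ⟨⟨p, a⟩, t⟩ | x
  · simp only [branchPrimeCount, primeCountN_of_sizeOf_le (sizeOf_lt_of_mem hb).le]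
  · rfl

theorem map_intB_inj {bs bs' : List (Multi d × Tree d)} :
    ((bs.map fun p => intB p.1 p.2) = bs'.map fun p => intB p.1 p.2) ↔ bs = bs' := by
  have intB_injective : Function.Injective fun p : Multi d × Tree d => intB p.1 p.2 := by
    rintro ⟨a, t⟩ ⟨a', t'⟩ ⟨⟩
    rfl
  exact intB_injective.list_map.eq_iff

theorem mk0_inj {l v l' v' : Bool} {bs bs' : List (Multi d × Tree d)} :
    mk0 l v bs = mk0 l' v' bs' ↔ l = l' ∧ v = v' ∧ bs = bs' := by
  simp only [mk0, node.injEq, true_and, map_intB_inj]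

theorem intPB_notMem_map_intB (a : Multi d) (u : Tree d) (bs : List (Multi d × Tree d)) :
    intPB a u ∉ bs.map fun p => intB p.1 p.2 := by
  simp [intPB, intB]

theorem isT0_mk0 {l v : Bool} {bs : List (Multi d × Tree d)} :
    IsT0 (mk0 l v bs) ↔ ∀ p ∈ bs, IsT0 p.2 := by
  rw [mk0, IsT0, shape_node]
  simp only [List.forall_mem_map, intB]
  aesop

theorem dec0_mk0 {l v : Bool} {bs : List (Multi d × Tree d)} :
    Dec0 (mk0 l v bs) ↔ ∀ p ∈ bs, p.1 = 0 ∧ Dec0 p.2 := by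
  rw [mk0, dec0_node]
  constructor
  · exact fun h p hp => h (false, p.1) p.2 (List.mem_map_of_mem hp)
  · intro h e t hmem
    obtain ⟨p, hp, ⟨⟩⟩ := List.mem_map.1 hmem
    exact h p hp

theorem IsT0.exists_eq_mk0 {t : Tree d} (ht : IsT0 t) :
    ∃ l v bs, t = mk0 l v bs ∧ ∀ p ∈ bs, IsT0 p.2 := by
  obtain ⟨l, g, k, v, bs⟩ := t
  obtain ⟨hg, hk, hbs⟩ := shape_node.1 ht
  simp only [Bool.false_eq_true, false_or, false_and, or_false] at hg hk hbs
  obtain ⟨cs, rfl⟩ : bs ∈ Set.range (List.map fun p : Multi d × Tree d => intB p.1 p.2) := by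
    rw [Set.range_list_map]
    intro b hb
    obtain ⟨p, a, t, rfl, rfl, -⟩ := hbs b hb
    exact ⟨(a, t), rfl⟩
  subst hg hk
  exact ⟨l, v, cs, rfl, isT0_mk0.1 ht⟩

theorem IsT0.induction {P : ∀ t : Tree d, IsT0 t → Prop}
    (mk0 : ∀ l v bs (hbs : ∀ p ∈ bs, IsT0 p.2), (∀ p hp, P p.2 (hbs p hp)) →
      P (mk0 l v bs) (isT0_mk0.2 hbs))
    {t : Tree d} (ht : IsT0 t) : P t ht := by
  induction t using node_induction with
  | node l g k v bs ih =>
    obtain ⟨l, v, cs, h, hcs⟩ := ht.exists_eq_mk0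
    obtain ⟨rfl, rfl, rfl, rfl, rfl⟩ := node.inj h
    exact mk0 l v cs hcs fun p hp => ih _ p.2 (List.mem_map_of_mem hp) (hcs p hp)

theorem IsT0.shape_allowing_prime {t : Tree d} (ht : IsT0 t) : Shape false false true t := by
  induction ht using IsT0.induction with
  | mk0 l v bs _ ih =>
    refine shape_node.2 ⟨.inr rfl, .inr rfl, List.forall_mem_map.2 fun q hq => .inl ?_⟩
    exact ⟨false, q.1, q.2, rfl, .inl rfl, ih q hq⟩

theorem IsT0.primeCount_eq_zero {t : Tree d} (ht : IsT0 t) : primeCount t = 0 := by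
  induction ht using IsT0.induction with
  | mk0 l v bs _ ih =>
    rw [mk0, primeCount_node, List.map_map, List.sum_eq_zero_iff]
    exact List.forall_mem_map.2 fun q hq => by simpa [intB, branchPrimeCount] using ih q hq

theorem IsT0.isT1 {t : Tree d} (ht : IsT0 t) : IsT1 t :=
  ⟨ht.shape_allowing_prime, ht.primeCount_eq_zero.trans_le zero_le_one⟩

theorem isT1_node {l g v : Bool} {k : Multi d} {bs : List (Branch d)} :
    IsT1 (node l g k v bs) ↔ g = false ∧ k = 0 ∧
      (∀ b ∈ bs, ∃ e t, b = Sum.inl (e, t) ∧ Shape false false true t) ∧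
      (bs.map branchPrimeCount).sum ≤ 1 := by
  simp [IsT1, shape_node, primeCount_node, and_assoc]

theorem isT1_node_append_cons {l v p : Bool} {xs ys : List (Multi d × Tree d)} {a : Multi d}
    {u : Tree d} (hxs : ∀ q ∈ xs, IsT0 q.2) (hys : ∀ q ∈ ys, IsT0 q.2)
    (hu : Shape false false true u) (hp : (if p then 1 else 0) + primeCount u ≤ 1) :
    IsT1 (node l false 0 v ((xs.map fun q => intB q.1 q.2) ++
      Sum.inl ((p, a), u) :: ys.map fun q => intB q.1 q.2)) := by
  obtain ⟨-, -, hx, -⟩ := isT1_node.1 (isT0_mk0 (l := l) (v := v).2 hxs).isT1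
  obtain ⟨-, -, hy, -⟩ := isT1_node.1 (isT0_mk0 (l := l) (v := v).2 hys).isT1
  have primeCount_xs := (isT0_mk0 (l := l) (v := v).2 hxs).primeCount_eq_zero
  have primeCount_ys := (isT0_mk0 (l := l) (v := v).2 hys).primeCount_eq_zero
  rw [mk0, primeCount_node] at primeCount_xs primeCount_ys
  refine isT1_node.2 ⟨rfl, rfl, ?_, ?_⟩
  · exact List.forall_mem_append.2 ⟨hx, List.forall_mem_cons.2 ⟨⟨_, _, rfl, hu⟩, hy⟩⟩
  · simpa only [List.map_append, List.map_cons, List.sum_append, List.sum_cons,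
      branchPrimeCount, primeCount_xs, primeCount_ys, zero_add, add_zero] using hp

theorem IsT1.of_cons {l g v : Bool} {k : Multi d} {b : Branch d} {bs : List (Branch d)}
    (h : IsT1 (node l g k v (b :: bs))) :
    IsT1 (node l g k v bs) ∧ IsT1 (node false false 0 false [b]) ∧
      ∃ e t, b = Sum.inl (e, t) ∧ IsT1 t := by
  obtain ⟨hg, hk, hshape, hcount⟩ := isT1_node.1 h
  obtain ⟨⟨e, t, rfl, ht⟩, hbs⟩ := List.forall_mem_cons.1 hshape
  rw [List.map_cons, List.sum_cons, branchPrimeCount] at hcount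
  refine ⟨isT1_node.2 ⟨hg, hk, hbs, by lia⟩, isT1_node.2 ⟨rfl, rfl, ?_, ?_⟩,
    e, t, rfl, ht, by lia⟩
  · exact List.forall_mem_singleton.2 ⟨e, t, rfl, ht⟩
  · rw [List.map_singleton, List.sum_singleton, branchPrimeCount]
    lia

end Tree

theorem finite_setOf_qk_eq (x : QTree d) : {t : Tree d | qk t = x}.Finite := by
  obtain ⟨t, rfl⟩ := Quot.exists_rep x
  exact (Tree.finite_setOf_tEquiv t).subset fun t' h => (qk_eq_qk.1 h).symm

/-- The finitely many planar representatives of a non-planar tree. -/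
def reps (x : QTree d) : Finset (Tree d) := (finite_setOf_qk_eq x).toFinset

@[simp]
theorem mem_reps {x : QTree d} {t : Tree d} : t ∈ reps x ↔ qk t = x :=
  (finite_setOf_qk_eq x).mem_toFinset

/-- The formal sum `Σ_{w ∈ Q} w` of a possibly infinite set of planar trees: the coefficient of a
non-planar tree is the number of its planar representatives in `Q`. -/
def ofSet (Q : Set (Tree d)) : Ser d := fun x => ∑ w ∈ reps x, Q.indicator 1 w

theorem exists_mem_of_ofSet_ne_zero {Q : Set (Tree d)} {x : QTree d} (h : ofSet Q x ≠ 0) :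
    ∃ w ∈ Q, w ∈ reps x := by
  obtain ⟨w, hw, hQ⟩ := Finset.exists_ne_zero_of_sum_ne_zero h
  exact ⟨w, Set.mem_of_indicator_ne_zero hQ, hw⟩

theorem ofSet_singleton (t : Tree d) : ofSet {t} = dqT t := by
  funext x
  simp [ofSet, dqT, Set.indicator_apply, eq_comm]

theorem ofSet_empty : ofSet (∅ : Set (Tree d)) = 0 := by
  funext x
  simp [ofSet]

theorem ofSet_union {Q Q' : Set (Tree d)} (h : Disjoint Q Q') :
    ofSet (Q ∪ Q') = ofSet Q + ofSet Q' := by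
  funext x
  simp [ofSet, Set.indicator_union_of_disjoint h, Finset.sum_add_distrib]

theorem finite_setOf_mem_of_pairwise_disjoint {α ι : Type*} {K : ι → Set α}
    (hK : Pairwise (Function.onFun Disjoint K)) (w : α) : {i | w ∈ K i}.Finite :=
  Set.Subsingleton.finite fun _ hi _ hj => hK.eq (Set.not_disjoint_iff.2 ⟨w, hi, hj⟩)

theorem finite_support_ofSet {ι : Type*} {K : ι → Set (Tree d)}
    (hK : Pairwise (Function.onFun Disjoint K)) (x : QTree d) :
    (Function.support fun i => ofSet (K i) x).Finite := by
  refine ((reps x).finite_toSet.biUnion fun w _ =>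
    finite_setOf_mem_of_pairwise_disjoint hK w).subset fun i hi => ?_
  obtain ⟨w, hw, hx⟩ := exists_mem_of_ofSet_ne_zero hi
  exact Set.mem_biUnion hx hw

theorem ofSet_iUnion {ι : Type*} {K : ι → Set (Tree d)}
    (hK : Pairwise (Function.onFun Disjoint K)) (x : QTree d) :
    ofSet (⋃ i, K i) x = ∑ᶠ i, ofSet (K i) x := by
  have indicator_iUnion (w : Tree d) :
      (⋃ i, K i).indicator (1 : Tree d → ℝ) w = ∑ᶠ i, (K i).indicator 1 w := by
    by_cases hw : w ∈ ⋃ i, K i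
    · obtain ⟨i, hi⟩ := Set.mem_iUnion.1 hw
      rw [Set.indicator_of_mem hw, finsum_eq_single _ i, Set.indicator_of_mem hi]
      exact fun j hj => Set.indicator_of_notMem (Set.disjoint_left.1 (hK hj.symm) hi) _
    · rw [Set.indicator_of_notMem hw, finsum_eq_zero_of_forall_eq_zero]
      exact fun i => Set.indicator_of_notMem (fun hi => hw (Set.mem_iUnion.2 ⟨i, hi⟩)) _
  simp only [ofSet, indicator_iUnion]
  refine (finsum_sum_comm _ _ fun w _ => ?_).symm
  exact (finite_setOf_mem_of_pairwise_disjoint hK w).subset fun i =>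
    Set.mem_of_indicator_ne_zero

theorem finsum_sum_fiber {α β M : Type*} [AddCommMonoid M] {π : α → β} {fiber : β → Finset α}
    (mem_fiber : ∀ a b, a ∈ fiber b ↔ π a = b) {f : α → M} (hf : f.support.Finite) :
    ∑ᶠ b, ∑ a ∈ fiber b, f a = ∑ᶠ a, f a := by
  have support_subset : (Function.support fun b => ∑ a ∈ fiber b, f a) ⊆
      (hf.toFinset.image π : Finset β) := fun b hb => by
    obtain ⟨a, ha, hfa⟩ := Finset.exists_ne_zero_of_sum_ne_zero hb
    exact Finset.mem_coe.2 (Finset.mem_image.2 ⟨a, hf.mem_toFinset.2 hfa, (mem_fiber a b).1 ha⟩)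
  rw [finsum_eq_sum_of_support_subset _ support_subset, finsum_eq_sum _ hf,
    ← Finset.sum_fiberwise_of_maps_to fun a => Finset.mem_image_of_mem π]
  refine Finset.sum_congr rfl fun b _ => (Finset.sum_subset ?_ ?_).symm
  · exact fun a ha => (mem_fiber a b).2 (Finset.mem_filter.1 ha).2
  · intro a ha hna
    by_contra hfa
    exact hna (Finset.mem_filter.2 ⟨hf.mem_toFinset.2 hfa, (mem_fiber a b).1 ha⟩)

theorem finsum_sum_indicator_mul {α β : Type*} {π : α → β} {fiber : β → Finset α}
    (mem_fiber : ∀ a b, a ∈ fiber b ↔ π a = b) {Q : Set α} {K : α → Set (Tree d)}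
    (hK : Q.PairwiseDisjoint K) {F : β → Ser d} (hF : ∀ a ∈ Q, F (π a) = ofSet (K a))
    (x : QTree d) :
    ∑ᶠ b, (∑ a ∈ fiber b, Q.indicator 1 a) * F b x = ofSet (⋃ a ∈ Q, K a) x := by
  have disjoint : Pairwise (Function.onFun Disjoint fun a => ⋃ (_ : a ∈ Q), K a) := by
    intro a b hab
    simp only [Function.onFun, Set.disjoint_iUnion_left, Set.disjoint_iUnion_right]
    exact fun hb ha => hK ha hb hab
  rw [ofSet_iUnion disjoint, ← finsum_sum_fiber mem_fiber (finite_support_ofSet disjoint x)]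
  refine finsum_congr fun b => ?_
  rw [Finset.sum_mul]
  refine Finset.sum_congr rfl fun a ha => ?_
  obtain rfl := (mem_fiber a b).1 ha
  by_cases haQ : a ∈ Q
  · simp [haQ, hF a haQ]
  · simp [haQ, ofSet_empty]

theorem extT_ofSet {F : QTree d → Ser d} {Q : Set (Tree d)} {K : Tree d → Set (Tree d)}
    (hK : Q.PairwiseDisjoint K) (hF : ∀ u ∈ Q, F (qk u) = ofSet (K u)) :
    extT F (ofSet Q) = ofSet (⋃ u ∈ Q, K u) :=
  funext <| finsum_sum_indicator_mul (fun _ _ => mem_reps) hK hF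

theorem finsum_ofSet_mul_ofSet_mul {F : QTree d → QTree d → Ser d} {Q Q' : Set (Tree d)}
    {K : Tree d → Tree d → Set (Tree d)}
    (hK : (Q ×ˢ Q').PairwiseDisjoint fun p => K p.1 p.2)
    (hF : ∀ u ∈ Q, ∀ v ∈ Q', F (qk u) (qk v) = ofSet (K u v)) (x : QTree d) :
    ∑ᶠ p : QTree d × QTree d, ofSet Q p.1 * ofSet Q' p.2 * F p.1 p.2 x =
      ofSet (⋃ p ∈ Q ×ˢ Q', K p.1 p.2) x := by
  rw [← finsum_sum_indicator_mul (π := Prod.map qk qk) (fiber := fun p => reps p.1 ×ˢ reps p.2)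
    (F := fun p => F p.1 p.2) (by simp [Prod.ext_iff]) hK fun p hp => hF _ hp.1 _ hp.2]
  refine finsum_congr fun p => ?_
  rw [ofSet, ofSet, Finset.sum_mul_sum, ← Finset.sum_product']
  simp only [← Set.indicator_prod_one]

theorem ofSet_iUnion_fintype {ι : Type*} [Fintype ι] {K : ι → Set (Tree d)}
    (hK : Pairwise (Function.onFun Disjoint K)) : ofSet (⋃ i, K i) = ∑ i, ofSet (K i) := by
  funext x
  rw [ofSet_iUnion hK, finsum_eq_sum_of_fintype, Finset.sum_apply]

theorem dqT_congr {t t' : Tree d} (h : Tree.TEquiv t t') : dqT t = dqT t' := by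
  unfold dqT
  rw [qk_eq_qk.2 h]

theorem mulS_ofSet {Q Q' : Set (Tree d)}
    (hmul : (Q ×ˢ Q').InjOn fun p => Tree.mul p.1 p.2) :
    mulS (ofSet Q) (ofSet Q') = ofSet (Set.image2 Tree.mul Q Q') := by
  funext x
  refine (finsum_ofSet_mul_ofSet_mul (F := fun c c' => dqT (Tree.mul (qout c) (qout c')))
    (K := fun u v => {Tree.mul u v}) ?_ ?_ x).trans ?_
  · exact fun p hp q hq hpq => Set.disjoint_singleton.2 fun h => hpq (hmul hp hq h)
  · intro u _ v _
    rw [ofSet_singleton]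
    exact dqT_congr ((qout_qk u).mul (qout_qk v))
  · rw [← Set.image_prod, Set.image_eq_iUnion]

theorem prod_zipWith_coeff_specsOf {bs : List (Multi d × Tree d)} {cs : List (QTree d)}
    (h : cs.length = bs.length) :
    (List.zipWith BSpec.coeff (specsOf bs) cs).prod =
      if cs = bs.map (fun q => qk q.2) then 1 else 0 := by
  induction bs generalizing cs with
  | nil => simp_all [specsOf]
  | cons q bs ih =>
    obtain ⟨c, cs, rfl⟩ := List.exists_cons_of_length_eq_add_one h
    have := ih (Nat.succ.inj h)
    simp_all [specsOf, BSpec.coeff, dqT, ← ite_and, and_comm]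

theorem zipWith_toBranch_specsOf (bs : List (Multi d × Tree d)) :
    List.zipWith BSpec.toBranch (specsOf bs) (bs.map fun q => qk q.2) =
      bs.map fun q => Tree.intB q.1 (qout (qk q.2)) := by
  simp [specsOf, List.zipWith_map, BSpec.toBranch, Tree.intB]

theorem exists_eq_append_cons_of_prod_zipWith_coeff_ne_zero {xs ys : List (Multi d × Tree d)}
    {s : BSpec d} {cs : List (QTree d)}
    (hlength : cs.length = (specsOf xs ++ s :: specsOf ys).length)
    (hprod : (List.zipWith BSpec.coeff (specsOf xs ++ s :: specsOf ys) cs).prod ≠ 0) :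
    ∃ c, (xs.map fun q => qk q.2) ++ c :: (ys.map fun q => qk q.2) = cs := by
  simp only [specsOf, List.length_append, List.length_map, List.length_cons] at hlength
  obtain ⟨cs₁, cs', rfl, h₁⟩ : ∃ cs₁ cs', cs = cs₁ ++ cs' ∧ cs₁.length = xs.length :=
    ⟨cs.take xs.length, cs.drop xs.length, (List.take_append_drop ..).symm,
      List.length_take_of_le (by lia)⟩
  rw [List.length_append] at hlength
  obtain ⟨c, cs₂, rfl⟩ := List.exists_cons_of_length_eq_add_one (l := cs') (n := ys.length) (by lia)
  rw [List.length_cons] at hlength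
  rw [List.zipWith_append (by simp [specsOf, h₁]), List.zipWith_cons_cons, List.prod_append,
    List.prod_cons, prod_zipWith_coeff_specsOf h₁, prod_zipWith_coeff_specsOf (by lia)] at hprod
  exact ⟨c, by simp_all⟩

theorem forall₂_bRel_map_qout_qk (bs : List (Multi d × Tree d)) :
    List.Forall₂ (Tree.BRel Tree.TEquiv) (bs.map fun q => Tree.intB q.1 (qout (qk q.2)))
      (bs.map fun q => Tree.intB q.1 q.2) := by
  rw [List.forall₂_map_left_iff, List.forall₂_map_right_iff]
  exact List.forall₂_same.2 fun q _ => ⟨rfl, rfl, qout_qk q.2⟩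

theorem nodeSer_specsOf_append_cons {l g v p : Bool} {k a : Multi d} {S : Ser d}
    {xs ys : List (Multi d × Tree d)} :
    nodeSer l g k v (specsOf xs ++ BSpec.ser p a S :: specsOf ys) =
      extT (fun c => dqT (Tree.node l g k v ((xs.map fun q => Tree.intB q.1 (qout (qk q.2))) ++
        Sum.inl ((p, a), qout c) :: ys.map fun q => Tree.intB q.1 (qout (qk q.2))))) S := by
  funext x
  let insert (c : QTree d) := (xs.map fun q => qk q.2) ++ c :: ys.map fun q => qk q.2
  have insert_injective : insert.Injective := fun c c' h => by simpa [insert] using h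
  have prod_eq_one (zs : List (Multi d × Tree d)) :
      (List.zipWith BSpec.coeff (specsOf zs) (zs.map fun q => qk q.2)).prod = 1 := by
    rw [prod_zipWith_coeff_specsOf (List.length_map _), if_pos rfl]
  rw [nodeSer, ← finsum_mem_univ,
    finsum_mem_inter_support_eq' _ Set.univ (Set.range insert), finsum_mem_range insert_injective]
  · refine finsum_congr fun c => ?_
    simp only [insert]
    rw [if_pos (by simp [specsOf]), List.zipWith_append (by simp [specsOf]),
      List.zipWith_append (by simp [specsOf]), List.zipWith_cons_cons, List.zipWith_cons_cons,
      zipWith_toBranch_specsOf, zipWith_toBranch_specsOf, List.prod_append, List.prod_cons,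
      prod_eq_one, prod_eq_one, one_mul, mul_one]
    rfl
  · intro cs hcs
    simp only [Function.mem_support, ne_eq, ite_eq_right_iff, mul_eq_zero, not_forall,
      not_or] at hcs
    obtain ⟨hlength, hprod, -⟩ := hcs
    exact iff_of_true trivial
      (exists_eq_append_cons_of_prod_zipWith_coeff_ne_zero hlength hprod)

theorem nodeSer_ofSet {l g v p : Bool} {k a : Multi d} {Q : Set (Tree d)}
    {xs ys : List (Multi d × Tree d)} :
    nodeSer l g k v (specsOf xs ++ BSpec.ser p a (ofSet Q) :: specsOf ys) =
      ofSet ((fun u => Tree.node l g k v ((xs.map fun q => Tree.intB q.1 q.2) ++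
        Sum.inl ((p, a), u) :: ys.map fun q => Tree.intB q.1 q.2)) '' Q) := by
  rw [nodeSer_specsOf_append_cons, Set.image_eq_iUnion]
  refine extT_ofSet (fun u _ u' _ huu' => ?_) fun u _ => ?_
  · exact Set.disjoint_singleton.2 fun h => huu' (by simpa using h)
  · rw [ofSet_singleton]
    exact dqT_congr (.node (List.rel_append (forall₂_bRel_map_qout_qk xs)
      (.cons ⟨rfl, rfl, qout_qk u⟩ (forall₂_bRel_map_qout_qk ys))))

namespace Tree

/-- The tree obtained by setting the decorations of all `ℐ`- and `ℐ'`-edges to `0`. -/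
def eraseDec : Tree d → Tree d
  | node l g k v bs => node l g k v (bs.attach.map fun
      | ⟨.inl ((p, _), t), _⟩ => .inl ((p, 0), eraseDec t)
      | ⟨.inr x, _⟩ => .inr x)
termination_by t => t
decreasing_by exact sizeOf_lt_of_mem ‹_›

/-- The action of `eraseDec` on a branch, including the decoration of its root edge. -/
def eraseBranch : Branch d → Branch d
  | .inl ((p, _), t) => .inl ((p, 0), eraseDec t)
  | .inr x => .inr x

theorem eraseDec_node {l g v : Bool} {k : Multi d} {bs : List (Branch d)} :
    eraseDec (node l g k v bs) = node l g k v (bs.map eraseBranch) := by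
  conv_rhs => rw [← List.attach_map_subtype_val bs, List.map_map]
  rw [eraseDec]
  congr 1
  refine List.map_congr_left fun b _ => ?_
  rcases b with ⟨⟨⟨p, a⟩, t⟩ | x, _⟩ <;> rfl

theorem eraseDec_eq_node {l g v : Bool} {k : Multi d} {bs : List (Branch d)} {w : Tree d} :
    eraseDec w = node l g k v bs ↔ ∃ cs, w = node l g k v cs ∧ cs.map eraseBranch = bs := by
  obtain ⟨l', g', k', v', cs⟩ := w
  rw [eraseDec_node]
  aesop

theorem eraseBranch_eq_inl {e : Bool × Multi d} {t : Tree d} {b : Branch d} :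
    eraseBranch b = .inl (e, t) ↔
      e.2 = 0 ∧ ∃ a u, b = .inl ((e.1, a), u) ∧ eraseDec u = t := by
  obtain ⟨p', a'⟩ := e
  rcases b with ⟨⟨p, a⟩, u⟩ | x <;> grind [eraseBranch]

theorem eraseDec_mul (s t : Tree d) : eraseDec (mul s t) = mul (eraseDec s) (eraseDec t) := by
  obtain ⟨l, g, k, v, bs⟩ := s
  obtain ⟨l', g', k', v', bs'⟩ := t
  simp only [mul, eraseDec_node, List.map_append]

theorem image2_mul_setOf_eraseDec_eq (s t : Tree d) :
    Set.image2 mul {w | eraseDec w = s} {w | eraseDec w = t} = {w | eraseDec w = mul s t} := by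
  apply Set.Subset.antisymm
  · rintro _ ⟨w, rfl, w', rfl, rfl⟩
    exact eraseDec_mul w w'
  · intro w hw
    obtain ⟨l, g, k, v, bs⟩ := s
    obtain ⟨l', g', k', v', bs'⟩ := t
    obtain ⟨cs, rfl, hcs⟩ := eraseDec_eq_node.1 hw
    obtain ⟨cs₁, cs₂, rfl, rfl, rfl⟩ := List.map_eq_append_iff.1 hcs
    exact ⟨node l g k v cs₁, eraseDec_node, node l' g' k' v' cs₂, eraseDec_node, rfl⟩

theorem injOn_mul_setOf_eraseDec_eq (s t : Tree d) :
    ({w | eraseDec w = s} ×ˢ {w | eraseDec w = t}).InjOn fun p => mul p.1 p.2 := by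
  rintro ⟨w₁, w₂⟩ ⟨h₁, h₂⟩ ⟨w₁', w₂'⟩ ⟨h₁', h₂'⟩ h
  obtain ⟨l, g, k, v, bs⟩ := s
  obtain ⟨l', g', k', v', bs'⟩ := t
  obtain ⟨cs₁, rfl, rfl⟩ := eraseDec_eq_node.1 h₁
  obtain ⟨cs₂, rfl, rfl⟩ := eraseDec_eq_node.1 h₂
  obtain ⟨cs₁', rfl, hcs₁⟩ := eraseDec_eq_node.1 h₁'
  obtain ⟨cs₂', rfl, hcs₂⟩ := eraseDec_eq_node.1 h₂'
  have length_eq : cs₁.length = cs₁'.length := by simpa using congrArg List.length hcs₁.symm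
  obtain ⟨rfl, rfl⟩ := List.append_inj (node.inj h).2.2.2.2 length_eq
  rfl

end Tree

theorem mulS_ofSet_eraseDec_eq (s t : Tree d) :
    mulS (ofSet {w | Tree.eraseDec w = s}) (ofSet {w | Tree.eraseDec w = t}) =
      ofSet {w | Tree.eraseDec w = Tree.mul s t} := by
  rw [mulS_ofSet (Tree.injOn_mul_setOf_eraseDec_eq s t), Tree.image2_mul_setOf_eraseDec_eq]

theorem finsum_nodeSer_ofSet_eraseDec_eq (p : Bool) (t : Tree d) (x : QTree d) :
    ∑ᶠ a, nodeSer false false 0 false [BSpec.ser p a (ofSet {w | Tree.eraseDec w = t})] x =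
      ofSet {w | Tree.eraseDec w = Tree.node false false 0 false [.inl ((p, 0), t)]} x := by
  let plant (a : Multi d) (u : Tree d) := Tree.node false false 0 false [.inl ((p, a), u)]
  have pairwise_disjoint : Pairwise (Function.onFun Disjoint fun a =>
      plant a '' {u | Tree.eraseDec u = t}) := by
    intro a a' haa'
    rw [Function.onFun, Set.disjoint_left]
    rintro _ ⟨u, -, rfl⟩ ⟨u', -, h⟩
    exact haa' (by simp_all [plant])
  have setOf_eq :
      {w | Tree.eraseDec w = plant 0 t} = ⋃ a, plant a '' {u | Tree.eraseDec u = t} := by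
    ext w
    simp only [plant, Tree.eraseDec_eq_node, List.map_eq_singleton_iff, Tree.eraseBranch_eq_inl,
      Set.mem_ofPred_eq, Set.mem_iUnion, Set.mem_image]
    constructor
    · rintro ⟨_, rfl, _, rfl, -, a, u, rfl, hu⟩
      exact ⟨a, u, hu, rfl⟩
    · rintro ⟨a, u, hu, rfl⟩
      exact ⟨_, rfl, _, rfl, trivial, a, u, rfl, hu⟩
  rw [setOf_eq, ofSet_iUnion pairwise_disjoint]
  exact finsum_congr fun a => congrFun (nodeSer_ofSet (xs := []) (ys := [])) x

theorem Up2Eqs.planted {Up2 : QTree d → Ser d} (hUp2 : Up2Eqs Up2) {e : Bool × Multi d}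
    {t : Tree d} (ht : Tree.IsT1 t) (ht0 : Tree.Dec0 t) (he : e.2 = 0)
    (h : Up2 (qk t) = ofSet {w | Tree.eraseDec w = t}) :
    Up2 (qk (Tree.node false false 0 false [.inl (e, t)])) =
      ofSet {w | Tree.eraseDec w = Tree.node false false 0 false [.inl (e, t)]} := by
  obtain ⟨p, a⟩ := e
  obtain rfl : a = 0 := he
  funext x
  rw [← finsum_nodeSer_ofSet_eraseDec_eq, ← h]
  cases p
  · exact congrFun (hUp2.2.1 t ht ht0).1 x
  · exact congrFun (hUp2.2.1 t ht ht0).2 x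

theorem Up2Eqs.eq_ofSet {Up2 : QTree d → Ser d} (hUp2 : Up2Eqs Up2) {t : Tree d}
    (ht : Tree.IsT1 t) (ht0 : Tree.Dec0 t) : Up2 (qk t) = ofSet {w | Tree.eraseDec w = t} := by
  induction t using Tree.node_induction with
  | node l g k v bs ih =>
    obtain ⟨rfl, rfl, -, -⟩ := Tree.isT1_node.1 ht
    induction bs with
    | nil =>
      refine (hUp2.1 l v).trans ?_
      rw [← ofSet_singleton]
      congr 1
      ext w
      simp [Tree.eraseDec_eq_node, Tree.atom]
    | cons b bs ih_bs =>
      obtain ⟨hbs, hb, e, t, rfl, hsub⟩ := ht.of_cons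
      rw [Tree.dec0_node] at ht0
      obtain ⟨he, hsub0⟩ := ht0 e t List.mem_cons_self
      have hbs0 : Tree.Dec0 (Tree.node l false 0 v bs) :=
        Tree.dec0_node.2 fun e t h => ht0 e t (List.mem_cons_of_mem _ h)
      have hb0 : Tree.Dec0 (Tree.node false false 0 false [.inl (e, t)]) :=
        Tree.dec0_node.2 fun e t h => ht0 e t (List.mem_of_mem_head? (by simp_all))
      have mul_eq : Tree.node l false 0 v (.inl (e, t) :: bs) =
          Tree.mul (Tree.node false false 0 false [.inl (e, t)]) (Tree.node l false 0 v bs) := by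
        simp only [Tree.mul, Bool.false_or, zero_add, List.singleton_append]
      rw [mul_eq, hUp2.2.2 _ _ hb hbs hb0 hbs0,
        ih_bs (fun e t h => ih e t (List.mem_cons_of_mem _ h)) hbs hbs0,
        hUp2.planted hsub hsub0 he (ih e t List.mem_cons_self hsub hsub0), mulS_ofSet_eraseDec_eq]

namespace Tree

/-- The relation `R`, read as the action of a root operation turning `t` into `w`, applied at some
node of a tree, which is reached from the root through `ℐ`-edges. -/
inductive AtNode (R : Tree d → Tree d → Prop) : Tree d → Tree d → Prop
  | root {w t : Tree d} : R w t → AtNode R w t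
  | branch {w t : Tree d} (l v : Bool) (xs : List (Multi d × Tree d)) (a : Multi d)
      (ys : List (Multi d × Tree d)) :
      AtNode R w t → AtNode R (mk0 l v (xs ++ (a, w) :: ys)) (mk0 l v (xs ++ (a, t) :: ys))

theorem atNode_exists_mem {γ : Type*} {C : Set γ} {R : γ → Tree d → Tree d → Prop}
    {w t : Tree d} : AtNode (fun w t => ∃ c ∈ C, R c w t) w t ↔ ∃ c ∈ C, AtNode (R c) w t := by
  constructor
  · intro h
    induction h with
    | root h => exact h.imp fun c hc => hc.imp_right .root
    | branch l v xs a ys _ ih => exact ih.imp fun c hc => hc.imp_right (.branch l v xs a ys)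
  · rintro ⟨c, hc, h⟩
    induction h with
    | root h => exact .root ⟨c, hc, h⟩
    | branch l v xs a ys _ ih => exact .branch l v xs a ys ih

theorem AtNode.not_isT0 {R : Tree d → Tree d → Prop}
    (hR : ∀ w t, R w t → ∀ l v bs, w ≠ mk0 l v bs) {w t : Tree d} (h : AtNode R w t) :
    ¬ IsT0 w := by
  induction h with
  | root h =>
    intro hw
    obtain ⟨l, v, bs, rfl, -⟩ := hw.exists_eq_mk0
    exact hR _ _ h l v bs rfl
  | branch l v xs a ys _ ih => exact fun hw => ih (isT0_mk0.1 hw (a, _) (by simp))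

theorem append_cons_inj_of_not_isT0 {xs ys xs' ys' : List (Multi d × Tree d)}
    {p p' : Multi d × Tree d} (hxs : ∀ q ∈ xs, IsT0 q.2) (hys : ∀ q ∈ ys, IsT0 q.2)
    (hp' : ¬ IsT0 p'.2) (h : xs ++ p :: ys = xs' ++ p' :: ys') :
    xs = xs' ∧ p = p' ∧ ys = ys' :=
  (List.append_cons_inj_of_notMem (fun hmem => hp' (hxs p' hmem))
    fun hmem => hp' (hys p' hmem)).1 h

theorem AtNode.unique {γ : Type*} {R : γ → Tree d → Tree d → Prop}
    (hR : ∀ c w t, R c w t → ∀ l v bs, w ≠ mk0 l v bs)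
    (R_unique : ∀ {c c' w t t'}, R c w t → R c' w t' → c = c' ∧ t = t')
    {c c' : γ} {w t t' : Tree d} (h : AtNode (R c) w t) (ht : IsT0 t) (h' : AtNode (R c') w t') :
    c = c' ∧ t = t' := by
  induction h generalizing t' with
  | root h =>
    cases h' with
    | root h' => exact R_unique h h'
    | branch => exact (hR c _ _ h _ _ _ rfl).elim
  | @branch w t l v xs a ys _ ih =>
    generalize hw : mk0 l v (xs ++ (a, w) :: ys) = w₀ at h'
    cases h' with
    | root h' => exact (hR c' _ _ h' _ _ _ hw.symm).elim
    | branch l' v' xs' a' ys' h' =>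
      obtain ⟨hxs, ht, hys⟩ : (∀ q ∈ xs, IsT0 q.2) ∧ IsT0 t ∧ ∀ q ∈ ys, IsT0 q.2 := by
        simpa only [isT0_mk0, List.forall_mem_append, List.forall_mem_cons] using ht
      obtain ⟨rfl, rfl, hbs⟩ := mk0_inj.1 hw
      obtain ⟨rfl, hp, rfl⟩ := append_cons_inj_of_not_isT0 hxs hys (h'.not_isT0 (hR c')) hbs
      obtain ⟨rfl, rfl⟩ := Prod.mk.inj hp
      obtain ⟨rfl, rfl⟩ := ih ht h'
      exact ⟨rfl, rfl⟩

theorem AtNode.right_unique {R : Tree d → Tree d → Prop}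
    (hR : ∀ w t, R w t → ∀ l v bs, w ≠ mk0 l v bs)
    (R_unique : ∀ {w t t'}, R w t → R w t' → t = t')
    {w t t' : Tree d} (h : AtNode R w t) (ht : IsT0 t) (h' : AtNode R w t') : t = t' :=
  (AtNode.unique (R := fun _ : Unit => R) (c := ()) (c' := ()) (fun _ => hR)
    (fun h h' => ⟨rfl, R_unique h h'⟩) h ht h').2

theorem AtNode.isT1 {R : Tree d → Tree d → Prop} (hR : ∀ {w t}, R w t → IsT0 t → IsT1 w)
    {w t : Tree d} (h : AtNode R w t) (ht : IsT0 t) : IsT1 w := by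
  induction h with
  | root h => exact hR h ht
  | branch l v xs a ys _ ih =>
    simp only [isT0_mk0, List.forall_mem_append, List.forall_mem_cons] at ht
    obtain ⟨hxs, ht, hys⟩ := ht
    rw [mk0, List.map_append, List.map_cons]
    exact isT1_node_append_cons hxs hys (ih ht).1 (by simpa using (ih ht).2)

theorem AtNode.dec0 {R : Tree d → Tree d → Prop} (hR : ∀ {w t}, R w t → Dec0 t → Dec0 w)
    {w t : Tree d} (h : AtNode R w t) (ht : Dec0 t) : Dec0 w := by
  induction h with
  | root h => exact hR h ht
  | branch l v xs a ys _ ih =>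
    simp only [dec0_mk0, List.forall_mem_append, List.forall_mem_cons] at ht ⊢
    exact ⟨ht.1, ⟨ht.2.1.1, ih ht.2.1.2⟩, ht.2.2⟩

theorem exists_eq_append_cons_iff_exists_fin {α : Type*} {bs : List α}
    {P : List α → α → List α → Prop} :
    (∃ xs b ys, bs = xs ++ b :: ys ∧ P xs b ys) ↔
      ∃ i : Fin bs.length, P (bs.take i) (bs.get i) (bs.drop (i + 1)) := by
  constructor
  · rintro ⟨xs, b, ys, rfl, h⟩
    exact ⟨⟨xs.length, by simp⟩, by simpa [← List.drop_drop] using h⟩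
  · rintro ⟨i, h⟩
    exact ⟨_, _, _, by simp, h⟩

theorem atNode_mk0 {R : Tree d → Tree d → Prop} {l v : Bool} {bs : List (Multi d × Tree d)}
    {w : Tree d} : AtNode R w (mk0 l v bs) ↔ R w (mk0 l v bs) ∨ ∃ i : Fin bs.length, ∃ u,
      AtNode R u (bs.get i).2 ∧
        w = mk0 l v (bs.take i ++ ((bs.get i).1, u) :: bs.drop (i + 1)) := by
  rw [← exists_eq_append_cons_iff_exists_fin (P := fun xs b ys => ∃ u, AtNode R u b.2 ∧
    w = mk0 l v (xs ++ (b.1, u) :: ys))]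
  constructor
  · intro h
    generalize ht : mk0 l v bs = t at h
    cases h with
    | root h => exact .inl h
    | branch l' v' xs a ys h =>
      obtain ⟨rfl, rfl, rfl⟩ := mk0_inj.1 ht
      exact .inr ⟨xs, (a, _), ys, rfl, _, h, rfl⟩
  · rintro (h | ⟨xs, b, ys, rfl, u, h, rfl⟩)
    exacts [.root h, .branch l v xs b.1 ys h]

end Tree

theorem nodeSer_set_ofSet {l v : Bool} {a : Multi d} {Q : Set (Tree d)}
    {bs : List (Multi d × Tree d)} (i : Fin bs.length) :
    nodeSer l false 0 v ((specsOf bs).set i (BSpec.ser false a (ofSet Q))) =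
      ofSet ((fun u => Tree.mk0 l v (bs.take i ++ (a, u) :: bs.drop (i + 1))) '' Q) := by
  rw [List.set_eq_take_append_cons_drop, if_pos (by simp [specsOf]), specsOf, ← List.map_take,
    ← List.map_drop]
  refine nodeSer_ofSet.trans ?_
  simp only [Tree.mk0, List.map_append, List.map_cons, Tree.intB]

theorem ofSet_setOf_atNode_mk0 {R : Tree d → Tree d → Prop}
    (hR : ∀ w t, R w t → ∀ l v bs, w ≠ Tree.mk0 l v bs) {l v : Bool}
    {bs : List (Multi d × Tree d)} (hbs : ∀ p ∈ bs, Tree.IsT0 p.2) :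
    ofSet {w | Tree.AtNode R w (Tree.mk0 l v bs)} =
      ofSet {w | R w (Tree.mk0 l v bs)} + ∑ i : Fin bs.length, nodeSer l false 0 v
        ((specsOf bs).set i
          (BSpec.ser false (bs.get i).1 (ofSet {u | Tree.AtNode R u (bs.get i).2}))) := by
  simp only [nodeSer_set_ofSet]
  set atBranch : Fin bs.length → Set (Tree d) := fun i =>
    (fun u => Tree.mk0 l v (bs.take i ++ ((bs.get i).1, u) :: bs.drop (i + 1))) ''
      {u | Tree.AtNode R u (bs.get i).2}
  have setOf_eq : {w | Tree.AtNode R w (Tree.mk0 l v bs)} =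
      {w | R w (Tree.mk0 l v bs)} ∪ ⋃ i, atBranch i := by
    ext w
    simp [atBranch, Tree.atNode_mk0, eq_comm]
  have root_disjoint : Disjoint {w | R w (Tree.mk0 l v bs)} (⋃ i, atBranch i) := by
    rw [Set.disjoint_iUnion_right]
    refine fun i => Set.disjoint_left.2 ?_
    rintro _ h ⟨u, -, rfl⟩
    exact hR _ _ h _ _ _ rfl
  have branch_disjoint : Pairwise (Function.onFun Disjoint atBranch) := by
    refine fun i j hij => Set.disjoint_left.2 ?_
    rintro _ ⟨u, hu, rfl⟩ ⟨u', -, h⟩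
    obtain ⟨htake, -, -⟩ := Tree.append_cons_inj_of_not_isT0
      (fun q hq => hbs q (List.mem_of_mem_take hq)) (fun q hq => hbs q (List.mem_of_mem_drop hq))
      (hu.not_isT0 hR) (Tree.mk0_inj.1 h).2.2
    exact hij (Fin.ext (by simpa [i.2.le, j.2.le] using (congrArg List.length htake).symm))
  rw [setOf_eq, ofSet_union root_disjoint, ofSet_iUnion_fintype branch_disjoint]

theorem eq_ofSet_atNode {D : QTree d → Ser d} {R : Tree d → Tree d → Prop}
    (hR : ∀ w t, R w t → ∀ l v bs, w ≠ Tree.mk0 l v bs)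
    (hD : ∀ l v bs, (∀ p ∈ bs, Tree.IsT0 p.2) → D (qk (Tree.mk0 l v bs)) =
      ofSet {w | R w (Tree.mk0 l v bs)} + ∑ i : Fin bs.length, nodeSer l false 0 v
        ((specsOf bs).set i (BSpec.ser false (bs.get i).1 (D (qk (bs.get i).2)))))
    {t : Tree d} (ht : Tree.IsT0 t) : D (qk t) = ofSet {w | Tree.AtNode R w t} := by
  induction ht using Tree.IsT0.induction with
  | mk0 l v bs hbs ih =>
    rw [hD l v bs hbs, ofSet_setOf_atNode_mk0 hR hbs]
    simp only [ih _ (List.get_mem bs _)]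

namespace Tree

/-- `SwitchRoot w t`: `w` arises from `t` by turning an `ℐ`-edge at the root into an `ℐ'`-edge of
the same decoration. -/
inductive SwitchRoot : Tree d → Tree d → Prop
  | mk (l v : Bool) (xs : List (Multi d × Tree d)) (a : Multi d) (u : Tree d)
      (ys : List (Multi d × Tree d)) :
      SwitchRoot (node l false 0 v ((xs.map fun p => intB p.1 p.2) ++
        intPB a u :: ys.map fun p => intB p.1 p.2)) (mk0 l v (xs ++ (a, u) :: ys))

theorem SwitchRoot.ne_mk0 {w t : Tree d} (h : SwitchRoot w t) (l v : Bool)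
    (bs : List (Multi d × Tree d)) : w ≠ mk0 l v bs := by
  obtain ⟨l', v', xs, a, u, ys⟩ := h
  intro heq
  refine intPB_notMem_map_intB a u bs ?_
  rw [← (node.inj heq).2.2.2.2]
  exact List.mem_append_right _ List.mem_cons_self

theorem SwitchRoot.right_unique {w t t' : Tree d} (h : SwitchRoot w t) (h' : SwitchRoot w t') :
    t = t' := by
  obtain ⟨l, v, xs, a, u, ys⟩ := h
  generalize hw : node l false 0 v _ = w' at h'
  obtain ⟨l', v', xs', a', u', ys'⟩ := h'
  obtain ⟨rfl, -, -, rfl, hbs⟩ := node.inj hw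
  obtain ⟨hxs, hb, hys⟩ := (List.append_cons_inj_of_notMem (intPB_notMem_map_intB a' u' xs)
    (intPB_notMem_map_intB a' u' ys)).1 hbs
  obtain rfl := map_intB_inj.1 hxs
  obtain rfl := map_intB_inj.1 hys
  cases hb
  rfl

theorem SwitchRoot.isT1 {w t : Tree d} (h : SwitchRoot w t) (ht : IsT0 t) : IsT1 w := by
  obtain ⟨l, v, xs, a, u, ys⟩ := h
  simp only [isT0_mk0, List.forall_mem_append, List.forall_mem_cons] at ht
  obtain ⟨hxs, hu, hys⟩ := ht
  exact isT1_node_append_cons hxs hys hu.shape_allowing_prime (by simp [hu.primeCount_eq_zero])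

theorem SwitchRoot.dec0 {w t : Tree d} (h : SwitchRoot w t) (ht : Dec0 t) : Dec0 w := by
  obtain ⟨l, v, xs, a, u, ys⟩ := h
  simp only [dec0_mk0, List.forall_mem_append, List.forall_mem_cons] at ht
  obtain ⟨hxs, ⟨ha, hu⟩, hys⟩ := ht
  refine dec0_node.2 fun e t hmem => ?_
  rcases List.mem_append.1 hmem with h | h
  · exact dec0_node.1 (dec0_mk0 (l := l) (v := v).2 hxs) e t h
  rcases List.mem_cons.1 h with h | h
  · cases h
    exact ⟨ha, hu⟩
  · exact dec0_node.1 (dec0_mk0 (l := l) (v := v).2 hys) e t h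

theorem switchRoot_mk0 {l v : Bool} {bs : List (Multi d × Tree d)} {w : Tree d} :
    SwitchRoot w (mk0 l v bs) ↔ ∃ i : Fin bs.length,
      w = node l false 0 v ((bs.map fun p => intB p.1 p.2).set i
        (intPB (bs.get i).1 (bs.get i).2)) := by
  simp only [List.set_eq_take_append_cons_drop, List.length_map, Fin.is_lt, if_true,
    ← List.map_take, ← List.map_drop]
  rw [← exists_eq_append_cons_iff_exists_fin (bs := bs) (P := fun xs b ys => w = node l false 0 v
    ((xs.map fun p => intB p.1 p.2) ++ intPB b.1 b.2 :: ys.map fun p => intB p.1 p.2))]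
  constructor
  · intro h
    generalize ht : mk0 l v bs = t at h
    obtain ⟨l', v', xs, a, u, ys⟩ := h
    obtain ⟨rfl, rfl, rfl⟩ := mk0_inj.1 ht
    exact ⟨xs, (a, u), ys, rfl, rfl⟩
  · rintro ⟨xs, b, ys, rfl, rfl⟩
    exact .mk l v xs b.1 b.2 ys

/-- `GraftRoot (a, s) w t`: the root of `t` has marker `1`, and `w` arises from `t` by grafting `s`
onto it via an `ℐ'_a`-edge, which resets the marker to `0`. -/
inductive GraftRoot (c : Multi d × Tree d) : Tree d → Tree d → Prop
  | mk (l : Bool) (bs : List (Multi d × Tree d)) :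
      GraftRoot c (node l false 0 false (intPB c.1 c.2 :: bs.map fun p => intB p.1 p.2))
        (mk0 l true bs)

theorem GraftRoot.ne_mk0 {c : Multi d × Tree d} {w t : Tree d} (h : GraftRoot c w t) (l v : Bool)
    (bs : List (Multi d × Tree d)) : w ≠ mk0 l v bs := by
  obtain ⟨l', bs'⟩ := h
  intro heq
  refine intPB_notMem_map_intB c.1 c.2 bs ?_
  rw [← (node.inj heq).2.2.2.2]
  exact List.mem_cons_self

theorem GraftRoot.unique {c c' : Multi d × Tree d} {w t t' : Tree d} (h : GraftRoot c w t)
    (h' : GraftRoot c' w t') : c = c' ∧ t = t' := by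
  obtain ⟨l, bs⟩ := h
  generalize hw : node l false 0 false _ = w' at h'
  obtain ⟨l', bs'⟩ := h'
  obtain ⟨rfl, -, -, -, hbs⟩ := node.inj hw
  obtain ⟨hb, hbs⟩ := List.cons.inj hbs
  obtain rfl := map_intB_inj.1 hbs
  obtain ⟨⟨-, ha⟩, hs⟩ : (true = true ∧ c.1 = c'.1) ∧ c.2 = c'.2 := by simpa [intPB] using hb
  exact ⟨Prod.ext ha hs, rfl⟩

theorem GraftRoot.isT1 {c : Multi d × Tree d} (hc : IsT0 c.2) {w t : Tree d}
    (h : GraftRoot c w t) (ht : IsT0 t) : IsT1 w := by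
  obtain ⟨l, bs⟩ := h
  exact isT1_node_append_cons (xs := []) (by simp) (isT0_mk0.1 ht) hc.shape_allowing_prime
    (by simp [hc.primeCount_eq_zero])

theorem GraftRoot.dec0 {c : Multi d × Tree d} (ha : c.1 = 0) (hs : Dec0 c.2) {w t : Tree d}
    (h : GraftRoot c w t) (ht : Dec0 t) : Dec0 w := by
  obtain ⟨l, bs⟩ := h
  rw [mk0, dec0_node] at ht
  refine dec0_node.2 fun e t hmem => ?_
  rcases List.mem_cons.1 hmem with h | h
  · cases h
    exact ⟨ha, hs⟩
  · exact ht e t h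

end Tree

theorem UpEqs.eq_ofSet {up : QTree d → Ser d} (hup : UpEqs up) {t : Tree d} (ht : Tree.IsT0 t) :
    up (qk t) = ofSet {w | Tree.AtNode Tree.SwitchRoot w t} := by
  refine eq_ofSet_atNode (fun _ _ => Tree.SwitchRoot.ne_mk0) (fun l v bs hbs => ?_) ht
  let switch (i : Fin bs.length) : Tree d :=
    .node l false 0 v ((bs.map fun p => Tree.intB p.1 p.2).set i
      (Tree.intPB (bs.get i).1 (bs.get i).2))
  have switch_injective : switch.Injective := by
    intro i j h
    by_contra hij
    refine Tree.intPB_notMem_map_intB (bs.get i).1 (bs.get i).2 bs ?_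
    have getElem?_eq := congrArg (·[(i : ℕ)]?) (Tree.node.inj h).2.2.2.2
    rw [List.getElem?_set_self (by simp), List.getElem?_set_ne (Fin.val_ne_of_ne (Ne.symm hij))]
      at getElem?_eq
    exact List.mem_of_getElem? getElem?_eq.symm
  have setOf_eq : {w | Tree.SwitchRoot w (Tree.mk0 l v bs)} = ⋃ i, {switch i} := by
    ext w
    simp [Tree.switchRoot_mk0, switch, eq_comm]
  have disjoint : Pairwise (Function.onFun Disjoint fun i => ({switch i} : Set (Tree d))) :=
    fun i j hij => Set.disjoint_singleton.2 (switch_injective.ne hij)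
  rw [hup l v bs hbs, setOf_eq, ofSet_iUnion_fintype disjoint]
  simp only [ofSet_singleton, switch]

theorem GraftEqs.eq_ofSet {graft : Multi d → QTree d → QTree d → Ser d} (hgraft : GraftEqs graft)
    (a : Multi d) {s t : Tree d} (hs : Tree.IsT0 s) (ht : Tree.IsT0 t) :
    graft a (qk s) (qk t) = ofSet {w | Tree.AtNode (Tree.GraftRoot (a, s)) w t} := by
  refine eq_ofSet_atNode (fun _ _ => Tree.GraftRoot.ne_mk0) (fun l v bs hbs => ?_) ht
  cases v
  · have setOf_eq_empty : {w | Tree.GraftRoot (a, s) w (Tree.mk0 l false bs)} = ∅ := by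
      refine Set.eq_empty_of_forall_notMem fun w h => ?_
      generalize ht : Tree.mk0 l false bs = t at h
      obtain ⟨l', bs'⟩ := h
      exact Bool.false_ne_true (Tree.mk0_inj.1 ht).2.1
    rw [(hgraft a s hs l bs hbs).2, setOf_eq_empty, ofSet_empty, zero_add]
  · have setOf_eq_singleton : {w | Tree.GraftRoot (a, s) w (Tree.mk0 l true bs)} =
        {.node l false 0 false (Tree.intPB a s :: bs.map fun p => Tree.intB p.1 p.2)} := by
      ext w
      constructor
      · intro h
        generalize ht : Tree.mk0 l true bs = t at h
        obtain ⟨l', bs'⟩ := h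
        obtain ⟨rfl, -, rfl⟩ := Tree.mk0_inj.1 ht
        rfl
      · rintro rfl
        exact .mk l bs
    rw [(hgraft a s hs l bs hbs).1, setOf_eq_singleton, ofSet_singleton]

namespace Tree

/-- The action of `eraseDec` on an `ℐ`-edge, given by its decoration and its subtree. -/
def eraseIntegral (p : Multi d × Tree d) : Multi d × Tree d := (0, eraseDec p.2)

theorem map_eraseBranch_map_intB (bs : List (Multi d × Tree d)) :
    (bs.map fun p => intB p.1 p.2).map eraseBranch =
      (bs.map eraseIntegral).map fun p => intB p.1 p.2 := by
  simp [intB, eraseBranch, eraseIntegral]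

theorem map_eraseBranch_eq_map_intB {cs : List (Branch d)} {bs : List (Multi d × Tree d)} :
    (cs.map eraseBranch = bs.map fun p => intB p.1 p.2) ↔
      ∃ bs' : List (Multi d × Tree d),
        (cs = bs'.map fun p => intB p.1 p.2) ∧ bs'.map eraseIntegral = bs := by
  constructor
  · intro h
    obtain ⟨bs', rfl⟩ : cs ∈ Set.range (List.map fun p : Multi d × Tree d => intB p.1 p.2) := by
      rw [Set.range_list_map]
      intro c hc
      obtain ⟨p, -, hp⟩ := List.mem_map.1 (h ▸ List.mem_map_of_mem hc)
      obtain ⟨-, a, u, rfl, -⟩ := eraseBranch_eq_inl.1 hp.symm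
      exact ⟨(a, u), rfl⟩
    exact ⟨bs', rfl, map_intB_inj.1 (map_eraseBranch_map_intB bs' ▸ h)⟩
  · rintro ⟨bs', rfl, rfl⟩
    exact map_eraseBranch_map_intB bs'

theorem eraseDec_mk0 {l v : Bool} {bs : List (Multi d × Tree d)} :
    eraseDec (mk0 l v bs) = mk0 l v (bs.map eraseIntegral) := by
  rw [mk0, eraseDec_node, map_eraseBranch_map_intB, mk0]

theorem eraseDec_eq_mk0 {l v : Bool} {bs : List (Multi d × Tree d)} {w : Tree d} :
    eraseDec w = mk0 l v bs ↔ ∃ bs', w = mk0 l v bs' ∧ bs'.map eraseIntegral = bs := by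
  simp only [mk0, eraseDec_eq_node, map_eraseBranch_eq_map_intB]
  constructor
  · rintro ⟨_, rfl, bs', rfl, h⟩
    exact ⟨bs', rfl, h⟩
  · rintro ⟨bs', rfl, h⟩
    exact ⟨_, rfl, bs', rfl, h⟩

theorem IsT0.of_eraseDec {t : Tree d} (h : IsT0 (eraseDec t)) : IsT0 t := by
  generalize hu : eraseDec t = u at h
  induction h using IsT0.induction generalizing t with
  | mk0 l v bs _ ih =>
    obtain ⟨bs', rfl, rfl⟩ := eraseDec_eq_mk0.1 hu
    exact isT0_mk0.2 fun p hp => ih _ (List.mem_map_of_mem hp) rfl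

theorem atNode_eraseDec_iff {R R' : Tree d → Tree d → Prop}
    (hR : ∀ z t, R (eraseDec z) t ↔ ∃ u, R' z u ∧ eraseDec u = t) {z t : Tree d} :
    AtNode R (eraseDec z) t ↔ ∃ u, AtNode R' z u ∧ eraseDec u = t := by
  constructor
  · intro h
    generalize hz : eraseDec z = w at h
    induction h generalizing z with
    | root h =>
      obtain ⟨u, hu, rfl⟩ := (hR z _).1 (hz ▸ h)
      exact ⟨u, .root hu, rfl⟩
    | branch l v xs a ys _ ih =>
      obtain ⟨bs, rfl, hbs⟩ := eraseDec_eq_mk0.1 hz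
      obtain ⟨xs', cs, rfl, rfl, hcs⟩ := List.map_eq_append_iff.1 hbs
      obtain ⟨⟨b, z'⟩, ys', rfl, hp, rfl⟩ := List.map_eq_cons_iff.1 hcs
      obtain ⟨rfl, rfl⟩ := Prod.mk.inj hp
      obtain ⟨u, hu, rfl⟩ := ih rfl
      refine ⟨_, .branch l v xs' b ys' hu, ?_⟩
      rw [eraseDec_mk0, List.map_append, List.map_cons, eraseIntegral]
  · rintro ⟨u, h, rfl⟩
    induction h with
    | root h => exact .root ((hR _ _).2 ⟨_, h, rfl⟩)
    | branch l v xs a ys _ ih =>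
      simp only [eraseDec_mk0, List.map_append, List.map_cons, eraseIntegral]
      exact .branch l v _ 0 _ ih

theorem switchRoot_eraseDec_iff (z t : Tree d) :
    SwitchRoot (eraseDec z) t ↔ ∃ u, SwitchRoot z u ∧ eraseDec u = t := by
  constructor
  · intro h
    generalize hz : eraseDec z = w at h
    obtain ⟨l, v, xs, a, u, ys⟩ := h
    obtain ⟨cs, rfl, hcs⟩ := eraseDec_eq_node.1 hz
    obtain ⟨cs₁, cs, rfl, hcs₁, hcs⟩ := List.map_eq_append_iff.1 hcs
    obtain ⟨b, cs₂, rfl, hb, hcs₂⟩ := List.map_eq_cons_iff.1 hcs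
    obtain ⟨xs', rfl, rfl⟩ := map_eraseBranch_eq_map_intB.1 hcs₁
    obtain ⟨ys', rfl, rfl⟩ := map_eraseBranch_eq_map_intB.1 hcs₂
    obtain ⟨rfl, a', u', rfl, rfl⟩ := eraseBranch_eq_inl.1 hb
    refine ⟨_, .mk l v xs' a' u' ys', ?_⟩
    rw [eraseDec_mk0, List.map_append, List.map_cons, eraseIntegral]
  · rintro ⟨_, ⟨l, v, xs, a, u, ys⟩, rfl⟩
    rw [eraseDec_node, eraseDec_mk0]
    simp only [List.map_append, List.map_cons, map_eraseBranch_map_intB]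
    exact .mk l v _ 0 _ _

theorem graftRoot_eraseDec_iff (s z t : Tree d) :
    GraftRoot (0, s) (eraseDec z) t ↔
      ∃ u, (∃ c ∈ {c : Multi d × Tree d | eraseDec c.2 = s}, GraftRoot c z u) ∧
        eraseDec u = t := by
  constructor
  · intro h
    generalize hz : eraseDec z = w at h
    obtain ⟨l, bs⟩ := h
    obtain ⟨cs, rfl, hcs⟩ := eraseDec_eq_node.1 hz
    obtain ⟨b, cs, rfl, hb, hcs⟩ := List.map_eq_cons_iff.1 hcs
    obtain ⟨bs', rfl, rfl⟩ := map_eraseBranch_eq_map_intB.1 hcs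
    obtain ⟨-, a, u, rfl, hu⟩ := eraseBranch_eq_inl.1 hb
    exact ⟨_, ⟨(a, u), hu, .mk l bs'⟩, eraseDec_mk0⟩
  · rintro ⟨_, ⟨c, rfl, l, bs⟩, rfl⟩
    rw [eraseDec_node, eraseDec_mk0, List.map_cons, map_eraseBranch_map_intB]
    exact .mk l _

theorem atNode_graftRoot_unique {a a' : Multi d} {p p' : Tree d × Tree d} {z : Tree d}
    (hp : IsT0 p.2) (h : AtNode (GraftRoot (a, p.1)) z p.2)
    (h' : AtNode (GraftRoot (a', p'.1)) z p'.2) : a = a' ∧ p = p' := by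
  obtain ⟨hc, ht⟩ := AtNode.unique (R := GraftRoot) (fun _ _ _ => GraftRoot.ne_mk0)
    GraftRoot.unique h hp h'
  obtain ⟨ha, hs⟩ := Prod.mk.inj hc
  exact ⟨ha, Prod.ext hs ht⟩

theorem atNode_graftRoot_eraseDec_iff {s t z : Tree d} :
    AtNode (GraftRoot (0, s)) (eraseDec z) t ↔
      ∃ a, ∃ p : Tree d × Tree d, (eraseDec p.1 = s ∧ eraseDec p.2 = t) ∧
        AtNode (GraftRoot (a, p.1)) z p.2 := by
  rw [atNode_eraseDec_iff (graftRoot_eraseDec_iff s)]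
  simp only [atNode_exists_mem (R := GraftRoot)]
  constructor
  · rintro ⟨u, ⟨c, hc, h⟩, hu⟩
    exact ⟨c.1, (c.2, u), ⟨hc, hu⟩, h⟩
  · rintro ⟨a, p, ⟨hs, ht⟩, h⟩
    exact ⟨p.2, ⟨(a, p.1), hs, h⟩, ht⟩

end Tree

theorem Up2Eqs.extT_ofSet {Up2 : QTree d → Ser d} (hUp2 : Up2Eqs Up2) {Q : Set (Tree d)}
    (hQ : ∀ w ∈ Q, Tree.IsT1 w ∧ Tree.Dec0 w) :
    extT Up2 (ofSet Q) = ofSet {z | Tree.eraseDec z ∈ Q} := by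
  have disjoint : Q.PairwiseDisjoint fun w => {z | Tree.eraseDec z = w} :=
    fun w _ w' _ hww' => Set.disjoint_left.2 fun z hz hz' => hww' (hz.symm.trans hz')
  rw [Flow.extT_ofSet disjoint fun w hw => hUp2.eq_ofSet (hQ w hw).1 (hQ w hw).2]
  congr 1
  ext z
  simp

theorem extT_up2_up {Up2 up : QTree d → Ser d} (hUp2 : Up2Eqs Up2) (hup : UpEqs up) {t : Tree d}
    (ht : Tree.IsT0 t) (ht0 : Tree.Dec0 t) :
    extT Up2 (up (qk t)) = extT up (Up2 (qk t)) := by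
  have isT0_of_mem : ∀ u ∈ {u | Tree.eraseDec u = t}, Tree.IsT0 u := by
    rintro u rfl
    exact ht.of_eraseDec
  have disjoint : {u | Tree.eraseDec u = t}.PairwiseDisjoint
      fun u => {z | Tree.AtNode Tree.SwitchRoot z u} :=
    fun u hu u' _ huu' => Set.disjoint_left.2 fun z hz hz' => huu' <|
      hz.right_unique (fun _ _ => Tree.SwitchRoot.ne_mk0) Tree.SwitchRoot.right_unique
        (isT0_of_mem u hu) hz'
  rw [hup.eq_ofSet ht, hUp2.eq_ofSet ht.isT1 ht0, hUp2.extT_ofSet fun w hw =>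
      ⟨hw.isT1 Tree.SwitchRoot.isT1 ht, hw.dec0 Tree.SwitchRoot.dec0 ht0⟩,
    extT_ofSet disjoint fun u hu => hup.eq_ofSet (isT0_of_mem u hu)]
  congr 1
  ext z
  simp [Tree.atNode_eraseDec_iff Tree.switchRoot_eraseDec_iff, and_comm]

theorem finsum_up2_mul_up2_mul_graft {Up2 : QTree d → Ser d}
    {graft : Multi d → QTree d → QTree d → Ser d} (hUp2 : Up2Eqs Up2) (hgraft : GraftEqs graft)
    {s t : Tree d} (hs : Tree.IsT0 s) (ht : Tree.IsT0 t) (hs0 : Tree.Dec0 s) (ht0 : Tree.Dec0 t)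
    (a : Multi d) (x : QTree d) :
    ∑ᶠ p : QTree d × QTree d, Up2 (qk s) p.1 * Up2 (qk t) p.2 * graft a p.1 p.2 x =
      ofSet (⋃ p ∈ {u | Tree.eraseDec u = s} ×ˢ {u | Tree.eraseDec u = t},
        {z | Tree.AtNode (Tree.GraftRoot (a, p.1)) z p.2}) x := by
  rw [hUp2.eq_ofSet hs.isT1 hs0, hUp2.eq_ofSet ht.isT1 ht0]
  refine finsum_ofSet_mul_ofSet_mul
    (K := fun u v => {z | Tree.AtNode (Tree.GraftRoot (a, u)) z v}) ?_ ?_ x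
  · exact fun p hp p' _ hpp' => Set.disjoint_left.2 fun z hz hz' =>
      hpp' (Tree.atNode_graftRoot_unique (Tree.IsT0.of_eraseDec (hp.2.symm ▸ ht)) hz hz').2
  · rintro u rfl v rfl
    exact hgraft.eq_ofSet a hs.of_eraseDec ht.of_eraseDec

theorem extT_up2_graft {Up2 : QTree d → Ser d} {graft : Multi d → QTree d → QTree d → Ser d}
    (hUp2 : Up2Eqs Up2) (hgraft : GraftEqs graft) {s t : Tree d} (hs : Tree.IsT0 s)
    (ht : Tree.IsT0 t) (hs0 : Tree.Dec0 s) (ht0 : Tree.Dec0 t) :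
    extT Up2 (graft 0 (qk s) (qk t)) = fun x =>
      ∑ᶠ a : Multi d, ∑ᶠ p : QTree d × QTree d,
        Up2 (qk s) p.1 * Up2 (qk t) p.2 * graft a p.1 p.2 x := by
  funext x
  simp only [finsum_up2_mul_up2_mul_graft hUp2 hgraft hs ht hs0 ht0]
  rw [hgraft.eq_ofSet 0 hs ht, hUp2.extT_ofSet fun w hw =>
      ⟨hw.isT1 (Tree.GraftRoot.isT1 hs) ht, hw.dec0 (Tree.GraftRoot.dec0 rfl hs0) ht0⟩,
    ← ofSet_iUnion]
  · refine congrArg (ofSet · x) (Set.ext fun z => ?_)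
    simp only [Set.mem_ofPred_eq, Tree.atNode_graftRoot_eraseDec_iff, Set.mem_iUnion, Set.mem_prod,
      exists_prop]
  · refine fun a a' haa' => Set.disjoint_left.2 fun z hz hz' => haa' ?_
    simp only [Set.mem_iUnion, Set.mem_prod, exists_prop] at hz hz'
    obtain ⟨⟨p, ⟨-, hp⟩, hz⟩, p', -, hz'⟩ := And.intro hz hz'
    exact (Tree.atNode_graftRoot_unique (Tree.IsT0.of_eraseDec (hp.symm ▸ ht)) hz hz').1

end

/-- The map `⇑` (summing over all edge decorations,
characterised by `Up2Eqs`) satisfies: (i) on `𝒯_0^0`, `⇑ ∘ ↑_μ = ↑_μ ∘ ⇑`;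
and (ii) for all `σ, τ ∈ 𝒯_0^0`,
`⇑(σ ↷_0 τ) = Σ_{a ∈ ℕ^{d+1}} (⇑σ) ↷_a (⇑τ)`, all identities holding in the
space of (possibly infinite) formal linear combinations of decorated trees.
The abstract derivative `↑_μ` and the grafting `↷_a` are characterised by
`UpEqs` and `GraftEqs`. -/
theorem up2_commutations {d : ℕ}
    (Up2 up : QTree d → Ser d)
    (graft : Multi d → QTree d → QTree d → Ser d)
    (hUp2 : Up2Eqs Up2) (hup : UpEqs up) (hgraft : GraftEqs graft) :
    (∀ t : Tree d, Tree.IsT0 t → Tree.Dec0 t →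
      extT Up2 (up (qk t)) = extT up (Up2 (qk t))) ∧
    (∀ s t : Tree d, Tree.IsT0 s → Tree.IsT0 t → Tree.Dec0 s → Tree.Dec0 t →
      extT Up2 (graft 0 (qk s) (qk t)) = fun x =>
        ∑ᶠ a : Multi d, ∑ᶠ p : QTree d × QTree d,
          Up2 (qk s) p.1 * Up2 (qk t) p.2 * graft a p.1 p.2 x) :=
  ⟨fun _ ht ht0 => extT_up2_up hUp2 hup ht ht0,
    fun _ _ hs ht hs0 ht0 => extT_up2_graft hUp2 hgraft hs ht hs0 ht0⟩

end Flow
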